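/- arXiv:0712.4336 — 8 statements merged into one kernel-verified Lean document; each statement's English description precedes it below -/
import Mathlib

section
/- Let A be a commutative ring, α a type, and G a function from finite subsets of α to A. Define the cumulant 𝔄(Y) := ∑_{P partition of Y} (−1)^{|P|−1}(|P|−1)! ∏_{X ∈ P} G(X) for every nonempty finite Y ⊆ α. Then for every nonempty finite Y ⊆ α the cluster expansion holds: ∑_{P partition of Y} ∏_{X ∈ P} 𝔄(X) = G(Y). -/
open Finset in
/-- The cumulant `𝔄(Y) = ∑_{P partition of Y} (−1)^{|P|−1} (|P|−1)! ∏_{X ∈ P} G(X)`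
built from a function `G` on finite subsets of `α` with values in a commutative ring. -/
def cumulantOf {α : Type*} [DecidableEq α] {A : Type*} [CommRing A]
    (G : Finset α → A) (Y : Finset α) : A :=
  ∑ P : Finpartition Y,
    (-1 : A) ^ (P.parts.card - 1) * (Nat.factorial (P.parts.card - 1) : A) *
      ∏ X ∈ P.parts, G X

open Finset in
/-- Pointing a block of a partition: pairs (partition, block) are pairs
(nonempty subset, partition of the complement). -/
theorem sum_pointed {α : Type*} [DecidableEq α] {A : Type*} [CommRing A]
    (Y : Finset α) (f : Finset α → Finset (Finset α) → A) :
    ∑ P : Finpartition Y, ∑ X ∈ P.parts, f X (P.parts.erase X) =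
      ∑ X ∈ Y.powerset with X ≠ ∅, ∑ Q : Finpartition (Y \ X), f X Q.parts := by
  rw [Finset.sum_sigma', Finset.sum_sigma']
  refine Finset.sum_bij'
    (i := fun p hp => ⟨p.2, p.1.ofSubset (Finset.erase_subset p.2 _) ?_⟩)
    (j := fun q hq => ⟨q.2.extend (b := q.1) (c := Y) ?_ ?_ ?_, q.1⟩) ?_ ?_ ?_ ?_ ?_
  · obtain ⟨P, X⟩ := p
    simp only [mem_sigma, mem_univ, true_and] at hp
    ext a
    simp only [Finset.sup_eq_biUnion, mem_biUnion, mem_erase, id, mem_sdiff]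
    constructor
    · rintro ⟨Z, ⟨hZX, hZ⟩, ha⟩
      exact ⟨P.subset hZ ha, fun haX => hZX (P.eq_of_mem_parts hZ hp ha haX)⟩
    · rintro ⟨haY, haX⟩
      obtain ⟨Z, hZ, ha⟩ := P.exists_mem haY
      exact ⟨Z, ⟨fun h => haX (h ▸ ha), hZ⟩, ha⟩
  · simp only [mem_sigma, mem_filter] at hq
    exact hq.1.2
  · exact Finset.sdiff_disjoint
  · simp only [mem_sigma, mem_filter, mem_powerset] at hq
    exact Finset.sdiff_union_of_subset hq.1.1
  · rintro ⟨P, X⟩ hp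
    simp only [mem_sigma, mem_univ, true_and] at hp
    simp only [mem_sigma, mem_filter, mem_powerset, mem_univ, and_true]
    exact ⟨P.subset hp, P.ne_empty hp⟩
  · rintro ⟨X, Q⟩ hq
    simp [Finpartition.extend]
  · rintro ⟨P, X⟩ hp
    simp only [mem_sigma, mem_univ, true_and] at hp
    refine Sigma.ext (Finpartition.ext ?_) HEq.rfl
    simp [Finpartition.extend, Finpartition.ofSubset, Finset.insert_erase hp]
  · rintro ⟨X, Q⟩ hq
    simp only [mem_sigma, mem_filter, mem_powerset, mem_univ, and_true] at hq
    refine Sigma.ext rfl (heq_of_eq (Finpartition.ext ?_))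
    have : X ∉ Q.parts := by
      intro h
      obtain ⟨a, ha⟩ := Q.nonempty_of_mem_parts h
      exact (mem_sdiff.1 (Q.subset h ha)).2 ha
    simp [Finpartition.extend, Finpartition.ofSubset, Finset.erase_insert this]
  · rintro ⟨P, X⟩ hp
    rfl

open Finset in
theorem filter_mem_parts {α : Type*} [DecidableEq α] {Y : Finset α} (P : Finpartition Y)
    {y : α} (hy : y ∈ Y) : {X ∈ P.parts | y ∈ X} = {P.part y} := by
  ext X
  simp only [mem_filter, mem_singleton]
  constructor
  · rintro ⟨h, h'⟩
    exact (P.part_eq_of_mem h h').symm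
  · rintro rfl
    exact ⟨P.part_mem.2 hy, P.mem_part_self.2 hy⟩

open Finset in
theorem sum_prod_rec {α : Type*} [DecidableEq α] {A : Type*} [CommRing A]
    (g : Finset α → A) {Y : Finset α} {y : α} (hy : y ∈ Y) :
    ∑ P : Finpartition Y, ∏ X ∈ P.parts, g X =
      ∑ X ∈ Y.powerset with y ∈ X,
        g X * ∑ Q : Finpartition (Y \ X), ∏ Z ∈ Q.parts, g Z := by
  have h := sum_pointed Y (fun X S => if y ∈ X then g X * ∏ Z ∈ S, g Z else 0)
  have hl : ∀ P : Finpartition Y, ∑ X ∈ P.parts,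
      (if y ∈ X then g X * ∏ Z ∈ P.parts.erase X, g Z else 0) = ∏ X ∈ P.parts, g X := by
    intro P
    rw [← Finset.sum_filter, filter_mem_parts P hy, Finset.sum_singleton,
      Finset.mul_prod_erase _ _ (P.part_mem.2 hy)]
  simp only [hl] at h
  rw [h, Finset.sum_filter, Finset.sum_filter]
  refine Finset.sum_congr rfl fun X _ => ?_
  by_cases hX : y ∈ X
  · simp [hX, Finset.ne_empty_of_mem hX, Finset.mul_sum]
  · simp [hX]

open Finset in
theorem cumulant_rec {α : Type*} [DecidableEq α] {A : Type*} [CommRing A]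
    (G : Finset α → A) {Y : Finset α} {y : α} (hy : y ∈ Y) :
    cumulantOf G Y + ∑ X ∈ Y.powerset with X ≠ ∅ ∧ y ∉ X, G X * cumulantOf G (Y \ X) = G Y := by
  have hYne : Y ≠ ∅ := Finset.ne_empty_of_mem hy
  have h := sum_pointed Y (fun X S => if y ∉ X then
    G X * ((-1 : A) ^ (S.card - 1) * (Nat.factorial (S.card - 1) : A) * ∏ Z ∈ S, G Z) else 0)
  have hl : ∀ P : Finpartition Y, ∑ X ∈ P.parts,
      (if y ∉ X then G X * ((-1 : A) ^ ((P.parts.erase X).card - 1) *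
        (Nat.factorial ((P.parts.erase X).card - 1) : A) * ∏ Z ∈ P.parts.erase X, G Z) else 0) =
      ((P.parts.card - 1 : ℕ) : A) * ((-1 : A) ^ (P.parts.card - 1 - 1) *
        (Nat.factorial (P.parts.card - 1 - 1) : A) * ∏ Z ∈ P.parts, G Z) := by
    intro P
    have hc : #{X ∈ P.parts | y ∉ X} = P.parts.card - 1 := by
      have := Finset.card_filter_add_card_filter_not (s := P.parts) (fun X => y ∈ X)
      rw [filter_mem_parts P hy, Finset.card_singleton] at this
      omega
    rw [← Finset.sum_filter, ← hc, ← nsmul_eq_mul, hc]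
    rw [← hc, ← Finset.sum_const, hc]
    refine Finset.sum_congr rfl fun X hX => ?_
    have hX' := (mem_filter.1 hX).1
    rw [Finset.card_erase_of_mem hX', ← Finset.mul_prod_erase _ _ hX']
    ring
  simp only [hl] at h
  have hr : ∑ X ∈ Y.powerset with X ≠ ∅ ∧ y ∉ X, G X * cumulantOf G (Y \ X) =
      ∑ P : Finpartition Y, ((P.parts.card - 1 : ℕ) : A) * ((-1 : A) ^ (P.parts.card - 1 - 1) *
        (Nat.factorial (P.parts.card - 1 - 1) : A) * ∏ Z ∈ P.parts, G Z) := by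
    rw [h, ← Finset.filter_filter, Finset.sum_filter]
    refine Finset.sum_congr rfl fun X _ => ?_
    by_cases hX : y ∈ X
    · simp [hX]
    · simp [hX, Finset.mul_sum, cumulantOf]
  rw [hr, cumulantOf, ← Finset.sum_add_distrib,
    Finset.sum_eq_single (Finpartition.indiscrete (a := Y) hYne)]
  · simp [Finpartition.indiscrete]
  · intro P _ hP
    have h0 : P.parts.card ≠ 0 := by
      rw [Finset.card_ne_zero]
      exact P.parts_nonempty hYne
    have h1 : P.parts.card ≠ 1 := by
      intro h1
      obtain ⟨X, hX⟩ := Finset.card_eq_one.1 h1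
      apply hP
      apply Finpartition.ext
      have := P.sup_parts
      rw [hX, Finset.sup_singleton] at this
      rw [hX]
      simp only [id] at this
      simp [Finpartition.indiscrete, this]
    obtain ⟨n, hn⟩ : ∃ n, P.parts.card = n + 2 := ⟨P.parts.card - 2, by omega⟩
    rw [hn]
    simp only [Nat.add_sub_cancel, show n + 2 - 1 = n + 1 from rfl, Nat.factorial_succ]
    push_cast
    ring
  · simp

/-- **Lemma 1 of the paper (cluster expansion).** For every nonempty finite `Y ⊆ α`,
`∑_{P partition of Y} ∏_{X ∈ P} 𝔄(X) = G(Y)`, where `𝔄` is the cumulant of `G`. -/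
theorem sum_partitions_prod_cumulant {α : Type*} [DecidableEq α] {A : Type*} [CommRing A]
    (G : Finset α → A) (Y : Finset α) (hY : Y.Nonempty) :
    ∑ P : Finpartition Y, ∏ X ∈ P.parts, cumulantOf G X = G Y := by
  induction Y using Finset.strongInduction with
  | H Y ih =>
    obtain ⟨y, hy⟩ := hY
    rw [sum_prod_rec _ hy]
    rw [← Finset.add_sum_erase _ _ (a := Y) (by simp [hy])]
    conv_rhs => rw [← cumulant_rec G hy]
    congr 1
    · have : ∀ Z : Finset α, Z = ∅ →
          ∑ Q : Finpartition Z, ∏ X ∈ Q.parts, cumulantOf G X = 1 := by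
        rintro Z rfl
        have hp : ∀ Q : Finpartition (∅ : Finset α), Q.parts = ∅ :=
          fun Q => Q.parts_eq_empty_iff.2 rfl
        have hu : Fintype.card (Finpartition (∅ : Finset α)) = 1 :=
          Fintype.card_eq_one_iff.2 ⟨Finpartition.empty _, fun Q =>
            Finpartition.ext ((hp Q).trans (hp _).symm)⟩
        simp [hp, hu]
      rw [this _ (by simp), mul_one]
    · refine Finset.sum_bij' (fun X _ => Y \ X) (fun X _ => Y \ X) ?_ ?_ ?_ ?_ ?_
      · intro X hX
        simp only [Finset.mem_erase, Finset.mem_filter, Finset.mem_powerset] at hX ⊢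
        refine ⟨Finset.sdiff_subset, fun h => hX.1 ?_, by simp [hX.2.2]⟩
        exact hX.2.1.antisymm (Finset.sdiff_eq_empty_iff_subset.1 h)
      · intro X hX
        simp only [Finset.mem_erase, Finset.mem_filter, Finset.mem_powerset] at hX ⊢
        refine ⟨fun h => hX.2.1 ?_, Finset.sdiff_subset, by simp [hX.2.2, hy]⟩
        rw [← Finset.sdiff_sdiff_eq_self hX.1, h, Finset.sdiff_self]
      · intro X hX
        simp only [Finset.mem_erase, Finset.mem_filter, Finset.mem_powerset] at hX
        exact Finset.sdiff_sdiff_eq_self hX.2.1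
      · intro X hX
        simp only [Finset.mem_filter, Finset.mem_powerset] at hX
        exact Finset.sdiff_sdiff_eq_self hX.1
      · intro X hX
        simp only [Finset.mem_erase, Finset.mem_filter, Finset.mem_powerset] at hX
        rw [Finset.sdiff_sdiff_eq_self hX.2.1, mul_comm, ih (Y \ X)]
        · exact Finset.sdiff_ssubset hX.2.1 ⟨y, hX.2.2⟩
        · rw [Finset.sdiff_nonempty]
          exact fun h => hX.1 (hX.2.1.antisymm h)
end

section
/- Let A be a commutative ring, α a type, and 𝔄 a function from nonempty finite subsets of α to A. Define G(Y) := ∑_{P partition of Y} ∏_{X ∈ P} 𝔄(X) for every nonempty finite Y ⊆ α. Then for every nonempty finite Y ⊆ α, 𝔄(Y) = ∑_{P partition of Y} (−1)^{|P|−1}(|P|−1)! ∏_{X ∈ P} G(X). -/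
open Finset in
theorem cumAux_pairs {α : Type*} [DecidableEq α] {A : Type*} [CommRing A]
    (Y : Finset α) (f : Finset α → Finset (Finset α) → A) :
    ∑ P : Finpartition Y, ∑ X ∈ P.parts, f X (P.parts.erase X) =
      ∑ X ∈ Y.powerset with X.Nonempty, ∑ Q : Finpartition (Y \ X), f X Q.parts := by
  have hnot : ∀ (X : Finset α) (hX : X.Nonempty) (Q : Finpartition (Y \ X)), X ∉ Q.parts := by
    intro X hX Q h
    obtain ⟨x, hx⟩ := hX
    exact (mem_sdiff.1 (Q.subset h hx)).2 hx
  rw [Finset.sum_sigma', Finset.sum_sigma']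
  symm
  refine Finset.sum_bij
    (fun p hp => ⟨p.2.extend (b := p.1) (c := Y)
      (by simp at hp; exact hp.2.ne_empty) sdiff_disjoint
      (by simp at hp; exact sdiff_union_of_subset hp.1), p.1⟩) ?_ ?_ ?_ ?_
  · rintro ⟨X, Q⟩ h
    simp
  · rintro ⟨X, Q⟩ h ⟨X', Q'⟩ h' e
    simp only [Sigma.mk.injEq, heq_eq_eq] at e
    obtain ⟨e1, rfl⟩ := e
    have hX : X.Nonempty := by simp at h; exact h.2
    have e2 := congrArg Finpartition.parts e1
    simp only [Finpartition.extend_parts] at e2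
    have e3 := congrArg (fun s => s.erase X) e2
    simp only [erase_insert (hnot X hX Q), erase_insert (hnot X hX Q')] at e3
    exact Sigma.ext rfl (heq_of_eq (Finpartition.ext e3))
  · rintro ⟨P, X⟩ h
    have hX : X ∈ P.parts := by simpa using h
    refine ⟨⟨X, P.ofSubset (parts := P.parts.erase X) (erase_subset _ _) ?_⟩, ?_, ?_⟩
    · ext x
      simp only [mem_sup, mem_erase, id, mem_sdiff]
      constructor
      · rintro ⟨Z, ⟨h1, h2⟩, hx⟩
        exact ⟨P.subset h2 hx, fun hx' => h1 (P.eq_of_mem_parts h2 hX hx hx')⟩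
      · rintro ⟨h1, h2⟩
        obtain ⟨Z, hZ, hx⟩ := P.exists_mem h1
        exact ⟨Z, ⟨by rintro rfl; exact h2 hx, hZ⟩, hx⟩
    · simp [P.subset hX, P.nonempty_of_mem_parts hX]
    · refine Sigma.ext (Finpartition.ext ?_) HEq.rfl
      simp [Finpartition.extend_parts, Finpartition.ofSubset, insert_erase hX]
  · rintro ⟨X, Q⟩ h
    have hX : X.Nonempty := by simp at h; exact h.2
    simp [erase_insert (hnot X hX Q)]

open Finset in
theorem cumAux_pointed {α : Type*} [DecidableEq α] {A : Type*} [CommRing A]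
    (Y : Finset α) (a : α) (ha : a ∈ Y) (g : Finset α → A) (c : ℕ → A) :
    ∑ P : Finpartition Y, c P.parts.card * ∏ X ∈ P.parts, g X =
      ∑ X ∈ Y.powerset with a ∈ X, g X *
        ∑ Q : Finpartition (Y \ X), c (Q.parts.card + 1) * ∏ Z ∈ Q.parts, g Z := by
  have key := cumAux_pairs Y (fun X s =>
    if a ∈ X then g X * (c (s.card + 1) * ∏ Z ∈ s, g Z) else 0)
  have hl : ∀ P : Finpartition Y, ∑ X ∈ P.parts, (if a ∈ X then g X *
      (c ((P.parts.erase X).card + 1) * ∏ Z ∈ P.parts.erase X, g Z) else 0) =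
      c P.parts.card * ∏ X ∈ P.parts, g X := by
    intro P
    obtain ⟨Z, hZ, haZ⟩ := P.exists_mem ha
    rw [Finset.sum_eq_single_of_mem Z hZ]
    · rw [if_pos haZ, card_erase_add_one hZ, ← mul_prod_erase _ _ hZ]; ring
    · intro X hX hne
      exact if_neg fun h => hne (P.eq_of_mem_parts hX hZ h haZ)
  simp only [hl] at key
  rw [key, sum_filter, sum_filter]
  refine sum_congr rfl fun X _ => ?_
  by_cases h : a ∈ X
  · have : X.Nonempty := ⟨a, h⟩
    simp [h, this, mul_sum]
  · simp [h]

open Finset in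
theorem cumAux_count {α : Type*} [DecidableEq α] {A : Type*} [CommRing A]
    (Y : Finset α) (g : Finset α → A) (c : ℕ → A) :
    ∑ P : Finpartition Y, (P.parts.card : A) * (c P.parts.card * ∏ X ∈ P.parts, g X) =
      ∑ X ∈ Y.powerset with X.Nonempty, g X *
        ∑ Q : Finpartition (Y \ X), c (Q.parts.card + 1) * ∏ Z ∈ Q.parts, g Z := by
  have key := cumAux_pairs Y (fun X s => g X * (c (s.card + 1) * ∏ Z ∈ s, g Z))
  simp only [mul_sum] at key ⊢
  rw [← key]
  refine sum_congr rfl fun P _ => ?_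
  rw [← nsmul_eq_mul, ← sum_const]
  refine sum_congr rfl fun X hX => ?_
  rw [card_erase_add_one hX, ← mul_prod_erase _ _ hX]; ring

/-- The convolution inverse of `g`. -/
def cumAuxInv {α : Type*} [DecidableEq α] {A : Type*} [CommRing A]
    (g : Finset α → A) (Y : Finset α) : A :=
  ∑ P : Finpartition Y, ((-1 : A) ^ P.parts.card * (Nat.factorial P.parts.card : A)) *
    ∏ X ∈ P.parts, g X

theorem cumAux_sum_empty {α : Type*} [DecidableEq α] {A : Type*} [CommRing A]
    (f : Finset (Finset α) → A) :
    ∑ P : Finpartition (∅ : Finset α), f P.parts = f ∅ := by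
  have h : ∀ P : Finpartition (∅ : Finset α), P.parts = ∅ := fun P =>
    Finpartition.parts_eq_empty_iff.2 rfl
  simp only [h]
  have : Fintype.card (Finpartition (∅ : Finset α)) = 1 :=
    Fintype.card_eq_one_iff.2 ⟨Finpartition.empty _, fun P => Finpartition.ext (by simp [h])⟩
  simp [this]

open Finset in
theorem cumAux_conv {α : Type*} [DecidableEq α] {A : Type*} [CommRing A]
    (g : Finset α → A) (hg : g ∅ = 1) (Y : Finset α) :
    ∑ X ∈ Y.powerset, g X * cumAuxInv g (Y \ X) = if Y = ∅ then 1 else 0 := by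
  split_ifs with hY
  · subst hY
    have := cumAux_sum_empty (α := α)
      (fun s => ((-1 : A) ^ s.card * (Nat.factorial s.card : A)) * ∏ X ∈ s, g X)
    simp only [card_empty, pow_zero, Nat.factorial_zero, prod_empty] at this
    rw [powerset_empty, sum_singleton, hg, sdiff_empty, cumAuxInv, this]
    simp
  · have key := cumAux_count Y g
      (fun k => (-1 : A) ^ (k - 1) * (Nat.factorial (k - 1) : A))
    have hl : ∑ P : Finpartition Y, (P.parts.card : A) *
        ((-1 : A) ^ (P.parts.card - 1) * (Nat.factorial (P.parts.card - 1) : A) *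
          ∏ X ∈ P.parts, g X) = - cumAuxInv g Y := by
      rw [cumAuxInv, ← sum_neg_distrib]
      refine sum_congr rfl fun P _ => ?_
      have hP : 0 < P.parts.card := card_pos.2 (P.parts_nonempty hY)
      obtain ⟨k, hk⟩ := Nat.exists_eq_succ_of_ne_zero hP.ne'
      rw [hk]
      simp only [Nat.succ_eq_add_one, Nat.add_sub_cancel, Nat.factorial_succ, pow_succ]
      push_cast
      ring
    simp only [hl, Nat.add_sub_cancel] at key
    rw [← sum_filter_add_sum_filter_not Y.powerset (fun X => X.Nonempty)]
    change _ = ∑ X ∈ Y.powerset with X.Nonempty, g X * cumAuxInv g (Y \ X) at key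
    rw [← key]
    have : Y.powerset.filter (fun X => ¬ X.Nonempty) = {∅} := by
      ext X
      simp only [mem_filter, mem_powerset, not_nonempty_iff_eq_empty, mem_singleton]
      exact ⟨fun h => h.2, fun h => ⟨by simp [h], h⟩⟩
    rw [this, sum_singleton, hg, sdiff_empty]
    simp

open Finset in
/-- The cluster expansion `G(Y) = ∑_{P partition of Y} ∏_{X ∈ P} 𝔄(X)` built from a
function `𝔄` on (nonempty) finite subsets of `α` with values in a commutative ring. -/
def clusterExpansionOf {α : Type*} [DecidableEq α] {A : Type*} [CommRing A]
    (𝔄 : Finset α → A) (Y : Finset α) : A :=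
  ∑ P : Finpartition Y, ∏ X ∈ P.parts, 𝔄 X

/-- **Lemma 1 of the paper (inversion direction).** If `G(Y) = ∑_{P partition of Y}
∏_{X ∈ P} 𝔄(X)`, then for every nonempty finite `Y ⊆ α` the cumulants are recovered by
`𝔄(Y) = ∑_{P partition of Y} (−1)^{|P|−1} (|P|−1)! ∏_{X ∈ P} G(X)`. -/
theorem cumulant_eq_sum_partitions_clusterExpansion {α : Type*} [DecidableEq α]
    {A : Type*} [CommRing A] (𝔄 : Finset α → A) (Y : Finset α) (hY : Y.Nonempty) :
    𝔄 Y =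
      ∑ P : Finpartition Y,
        (-1 : A) ^ (P.parts.card - 1) * (Nat.factorial (P.parts.card - 1) : A) *
          ∏ X ∈ P.parts, clusterExpansionOf 𝔄 X := by
  classical
  obtain ⟨a, ha⟩ := hY
  have hG0 : clusterExpansionOf 𝔄 ∅ = 1 := by
    have := cumAux_sum_empty (α := α) (fun s => ∏ X ∈ s, 𝔄 X)
    simpa [clusterExpansionOf] using this
  have hG : ∀ X : Finset α, a ∈ X → clusterExpansionOf 𝔄 X =
      ∑ Z ∈ X.powerset with a ∈ Z, 𝔄 Z * clusterExpansionOf 𝔄 (X \ Z) := by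
    intro X hX
    have := cumAux_pointed X a hX 𝔄 (fun _ => 1)
    simpa [clusterExpansionOf] using this
  rw [cumAux_pointed Y a ha (clusterExpansionOf 𝔄)
    (fun k => (-1 : A) ^ (k - 1) * (Nat.factorial (k - 1) : A))]
  simp only [Nat.add_sub_cancel]
  change _ = ∑ X ∈ Y.powerset with a ∈ X,
    clusterExpansionOf 𝔄 X * cumAuxInv (clusterExpansionOf 𝔄) (Y \ X)
  set G := clusterExpansionOf 𝔄 with hGdef
  have h1 : ∑ X ∈ Y.powerset with a ∈ X, G X * cumAuxInv G (Y \ X) =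
      ∑ X ∈ Y.powerset with a ∈ X, ∑ Z ∈ X.powerset with a ∈ Z,
        𝔄 Z * (G (X \ Z) * cumAuxInv G (Y \ X)) := by
    refine Finset.sum_congr rfl fun X hX => ?_
    rw [hG X (Finset.mem_filter.1 hX).2, Finset.sum_mul]
    exact Finset.sum_congr rfl fun Z _ => by ring
  have h2 : ∑ X ∈ Y.powerset with a ∈ X, ∑ Z ∈ X.powerset with a ∈ Z,
        𝔄 Z * (G (X \ Z) * cumAuxInv G (Y \ X)) =
      ∑ Z ∈ Y.powerset with a ∈ Z, ∑ W ∈ (Y \ Z).powerset,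
        𝔄 Z * (G W * cumAuxInv G ((Y \ Z) \ W)) := by
    rw [Finset.sum_sigma', Finset.sum_sigma']
    refine Finset.sum_bij' (fun p _ => ⟨p.2, p.1 \ p.2⟩) (fun p _ => ⟨p.1 ∪ p.2, p.1⟩)
      ?_ ?_ ?_ ?_ ?_
    · rintro ⟨X, Z⟩ h
      simp only [Finset.mem_sigma, Finset.mem_filter, Finset.mem_powerset] at h ⊢
      exact ⟨⟨h.2.1.trans h.1.1, h.2.2⟩, Finset.sdiff_subset_sdiff h.1.1 le_rfl⟩
    · rintro ⟨Z, W⟩ h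
      simp only [Finset.mem_sigma, Finset.mem_filter, Finset.mem_powerset] at h ⊢
      exact ⟨⟨Finset.union_subset h.1.1 (h.2.trans Finset.sdiff_subset),
        Finset.mem_union_left _ h.1.2⟩, Finset.subset_union_left, h.1.2⟩
    · rintro ⟨X, Z⟩ h
      simp only [Finset.mem_sigma, Finset.mem_filter, Finset.mem_powerset] at h
      simp [Finset.union_sdiff_of_subset h.2.1]
    · rintro ⟨Z, W⟩ h
      simp only [Finset.mem_sigma, Finset.mem_filter, Finset.mem_powerset] at h
      have : (Z ∪ W) \ Z = W := by
        rw [Finset.union_sdiff_left]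
        exact Finset.sdiff_eq_self_of_disjoint (Finset.disjoint_of_subset_left h.2
          Finset.sdiff_disjoint)
      simp [this]
    · rintro ⟨X, Z⟩ h
      simp only [Finset.mem_sigma, Finset.mem_filter, Finset.mem_powerset] at h
      have : (Y \ Z) \ (X \ Z) = Y \ X := by
        ext x
        have := @h.2.1 x
        simp only [Finset.mem_sdiff]
        tauto
      simp only [this]
  rw [h1, h2]
  simp only [← Finset.mul_sum, cumAux_conv G hG0]
  rw [Finset.sum_eq_single_of_mem Y (by simp [ha])]
  · simp
  · intro Z hZ hne
    have hZ' := Finset.mem_powerset.1 (Finset.mem_filter.1 hZ).1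
    rw [if_neg, mul_zero]
    intro h
    exact hne (Finset.Subset.antisymm hZ' (Finset.sdiff_eq_empty_iff_subset.1 h))
end

section
/- Let A be a commutative ring, α a type, and f : {finite subsets of α} → A with f(∅) = 0. Define the ∗-product of two such functions by (f ∗ h)(Y) := ∑_{Z ⊆ Y} f(Z) h(Y∖Z), the sum over all subsets Z of Y (including ∅ and Y). Then for every n ≥ 1 and every finite set Y, the n-fold ∗-power satisfies f^{∗n}(Y) = n! · ∑_{P partition of Y with |P| = n} ∏_{X ∈ P} f(X); in particular f^{∗n}(Y) = 0 if |Y| < n. -/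
/-- The `∗`-product `(f ∗ h)(Y) = ∑_{Z ⊆ Y} f(Z) h(Y∖Z)` on functions from finite subsets
of `α` to a commutative ring `A` (the sum runs over all subsets `Z` of `Y`, including `∅`
and `Y` itself). -/
def starConv {α : Type*} [DecidableEq α] {A : Type*} [CommRing A]
    (f h : Finset α → A) (Y : Finset α) : A :=
  ∑ Z ∈ Y.powerset, f Z * h (Y \ Z)

/-- The `n`-fold `∗`-power `f^{∗n}`; the `0`-th power is the unit of the `∗`-product. -/
def starPow {α : Type*} [DecidableEq α] {A : Type*} [CommRing A]
    (f : Finset α → A) : ℕ → Finset α → A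
  | 0 => fun Y => if Y = ∅ then 1 else 0
  | n + 1 => starConv f (starPow f n)

/-- Non-dependent version of the notion of partition of `Y`. -/
def IsPartOf {α : Type*} [DecidableEq α] (Y : Finset α) (p : Finset (Finset α)) : Prop :=
  ∅ ∉ p ∧ (∀ x ∈ p, ∀ y ∈ p, x ≠ y → Disjoint x y) ∧ (∀ a, a ∈ Y ↔ ∃ x ∈ p, a ∈ x)

open Classical in
/-- The finite set of partitions of `Y` with `n` blocks. -/
noncomputable def partsOf {α : Type*} [DecidableEq α] (Y : Finset α) (n : ℕ) :
    Finset (Finset (Finset α)) :=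
  Y.powerset.powerset.filter (fun p => IsPartOf Y p ∧ p.card = n)

theorem mem_partsOf {α : Type*} [DecidableEq α] (Y : Finset α) (n : ℕ) (p : Finset (Finset α)) :
    p ∈ partsOf Y n ↔ IsPartOf Y p ∧ p.card = n := by
  classical
  simp only [partsOf, Finset.mem_filter, Finset.mem_powerset, and_iff_right_iff_imp]
  rintro ⟨⟨_, _, h⟩, _⟩ x hx
  rw [Finset.mem_powerset]
  intro a ha
  exact (h a).2 ⟨x, hx, ha⟩

theorem isPartOf_parts {α : Type*} [DecidableEq α] (Y : Finset α) (P : Finpartition Y) :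
    IsPartOf Y P.parts := by
  refine ⟨P.bot_notMem, fun x hx y hy hxy => P.disjoint hx hy hxy, fun a => ?_⟩
  conv_lhs => rw [← P.sup_parts]
  simp [Finset.mem_sup]

theorem sum_finpartition {α : Type*} [DecidableEq α] {A : Type*} [CommRing A]
    (g : Finset (Finset α) → A) (n : ℕ) (Y : Finset α) :
    ∑ P ∈ Finset.univ.filter (fun P : Finpartition Y => P.parts.card = n), g P.parts
      = ∑ p ∈ partsOf Y n, g p := by
  refine Finset.sum_bij (fun P _ => P.parts) ?_ ?_ ?_ ?_
  · intro P hP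
    rw [mem_partsOf]
    exact ⟨isPartOf_parts Y P, by simpa using hP⟩
  · intro P _ Q _ h
    exact Finpartition.ext h
  · intro p hp
    rw [mem_partsOf] at hp
    obtain ⟨⟨h0, h1, h2⟩, hc⟩ := hp
    refine ⟨⟨p, ?_, ?_, h0⟩, ?_, rfl⟩
    · rw [Finset.supIndep_iff_pairwiseDisjoint]
      intro x hx y hy hxy
      exact h1 x hx y hy hxy
    · ext a
      rw [h2 a, Finset.mem_sup]
      simp
    · simpa using hc
  · intro P _
    rfl

theorem isPartOf_insert {α : Type*} [DecidableEq α] {Y Z : Finset α} {q : Finset (Finset α)}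
    (hZ : Z ⊆ Y) (hZ0 : Z ≠ ∅) (hq : IsPartOf (Y \ Z) q) :
    Z ∉ q ∧ IsPartOf Y (insert Z q) := by
  obtain ⟨h0, h1, h2⟩ := hq
  have hd : ∀ x ∈ q, Disjoint Z x := by
    intro x hx
    rw [Finset.disjoint_left]
    intro a ha hax
    have := (h2 a).2 ⟨x, hx, hax⟩
    exact (Finset.mem_sdiff.1 this).2 ha
  have hn : Z ∉ q := fun h => hZ0 (disjoint_self.1 (hd Z h))
  refine ⟨hn, ?_, ?_, ?_⟩
  · simp [h0, hZ0.symm]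
  · intro x hx y hy hxy
    rw [Finset.mem_insert] at hx hy
    rcases hx with rfl | hx <;> rcases hy with rfl | hy
    · exact absurd rfl hxy
    · exact hd _ hy
    · exact (hd _ hx).symm
    · exact h1 x hx y hy hxy
  · intro a
    have := h2 a
    have := @hZ a
    simp only [Finset.mem_sdiff, Finset.exists_mem_insert] at *
    by_cases haZ : a ∈ Z
    · simp [haZ, hZ haZ]
    · simpa [haZ] using h2 a

theorem isPartOf_erase {α : Type*} [DecidableEq α] {Y X : Finset α} {p : Finset (Finset α)}
    (hX : X ∈ p) (hp : IsPartOf Y p) :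
    X ⊆ Y ∧ X ≠ ∅ ∧ IsPartOf (Y \ X) (p.erase X) := by
  obtain ⟨h0, h1, h2⟩ := hp
  refine ⟨fun a ha => (h2 a).2 ⟨X, hX, ha⟩, fun h => h0 (h ▸ hX), ?_, ?_, ?_⟩
  · exact fun h => h0 (Finset.mem_of_mem_erase h)
  · exact fun x hx y hy => h1 x (Finset.mem_of_mem_erase hx) y (Finset.mem_of_mem_erase hy)
  · intro a
    rw [Finset.mem_sdiff, h2 a]
    constructor
    · rintro ⟨⟨x, hx, ha⟩, hn⟩
      exact ⟨x, Finset.mem_erase.2 ⟨fun h => hn (h ▸ ha), hx⟩, ha⟩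
    · rintro ⟨x, hx, ha⟩
      obtain ⟨hne, hx⟩ := Finset.mem_erase.1 hx
      exact ⟨⟨x, hx, ha⟩, Finset.disjoint_left.1 (h1 x hx X hX hne) ha⟩

theorem starPow_eq_aux {α : Type*} [DecidableEq α]
    {A : Type*} [CommRing A] (f : Finset α → A) (hf : f ∅ = 0) (n : ℕ) :
    ∀ Y : Finset α, starPow f n Y = (Nat.factorial n : A) *
      ∑ p ∈ partsOf Y n, ∏ X ∈ p, f X := by
  induction n with
  | zero =>
    intro Y
    have hY : partsOf Y 0 = if Y = ∅ then {∅} else ∅ := by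
      ext p
      rw [mem_partsOf, Finset.card_eq_zero]
      split_ifs with h
      · subst h
        simp only [Finset.mem_singleton, and_iff_right_iff_imp]
        rintro rfl
        simp [IsPartOf]
      · simp only [Finset.notMem_empty, iff_false]
        rintro ⟨⟨_, _, h2⟩, rfl⟩
        apply h
        ext a
        simp [h2 a]
    rw [hY]
    by_cases h : Y = ∅ <;> simp [starPow, h]
  | succ n ih =>
    intro Y
    have key : ∑ Z ∈ Y.powerset.filter (fun Z => Z ≠ ∅), ∑ q ∈ partsOf (Y \ Z) n,
          f Z * ∏ X ∈ q, f X
        = ∑ p ∈ partsOf Y (n + 1), ∑ X ∈ p, ∏ X ∈ p, f X := by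
      rw [Finset.sum_sigma', Finset.sum_sigma']
      refine Finset.sum_bij' (fun a _ => ⟨insert a.1 a.2, a.1⟩)
        (fun b _ => ⟨b.2, b.1.erase b.2⟩) ?_ ?_ ?_ ?_ ?_
      · rintro ⟨Z, q⟩ h
        simp only [Finset.mem_sigma, Finset.mem_filter, Finset.mem_powerset, mem_partsOf] at h ⊢
        obtain ⟨⟨hZ, hZ0⟩, hq, hc⟩ := h
        obtain ⟨h1, h2⟩ := isPartOf_insert hZ hZ0 hq
        exact ⟨⟨h2, by rw [Finset.card_insert_of_notMem h1, hc]⟩, Finset.mem_insert_self _ _⟩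
      · rintro ⟨p, X⟩ h
        simp only [Finset.mem_sigma, Finset.mem_filter, Finset.mem_powerset, mem_partsOf] at h ⊢
        obtain ⟨⟨hp, hc⟩, hX⟩ := h
        obtain ⟨h1, h2, h3⟩ := isPartOf_erase hX hp
        exact ⟨⟨h1, h2⟩, h3, by rw [Finset.card_erase_of_mem hX, hc]; rfl⟩
      · rintro ⟨Z, q⟩ h
        simp only [Finset.mem_sigma, Finset.mem_filter, Finset.mem_powerset, mem_partsOf] at h
        obtain ⟨⟨hZ, hZ0⟩, hq, hc⟩ := h
        simp [Finset.erase_insert (isPartOf_insert hZ hZ0 hq).1]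
      · rintro ⟨p, X⟩ h
        simp only [Finset.mem_sigma] at h
        simp [Finset.insert_erase h.2]
      · rintro ⟨Z, q⟩ h
        simp only [Finset.mem_sigma, Finset.mem_filter, Finset.mem_powerset, mem_partsOf] at h
        obtain ⟨⟨hZ, hZ0⟩, hq, hc⟩ := h
        simp [Finset.prod_insert (isPartOf_insert hZ hZ0 hq).1]
    have key2 : ∑ p ∈ partsOf Y (n + 1), ∑ X ∈ p, ∏ X ∈ p, f X
        = ((n + 1 : ℕ) : A) * ∑ p ∈ partsOf Y (n + 1), ∏ X ∈ p, f X := by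
      rw [Finset.mul_sum]
      refine Finset.sum_congr rfl fun p hp => ?_
      rw [Finset.sum_const, ((mem_partsOf _ _ _).1 hp).2, nsmul_eq_mul]
    calc starPow f (n + 1) Y
        = ∑ Z ∈ Y.powerset, f Z * starPow f n (Y \ Z) := rfl
      _ = ∑ Z ∈ Y.powerset.filter (fun Z => Z ≠ ∅), f Z * starPow f n (Y \ Z) := by
          symm
          apply Finset.sum_filter_of_ne
          rintro Z _ h rfl
          exact h (by rw [hf, zero_mul])
      _ = (Nat.factorial n : A) * ∑ Z ∈ Y.powerset.filter (fun Z => Z ≠ ∅),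
            ∑ q ∈ partsOf (Y \ Z) n, f Z * ∏ X ∈ q, f X := by
          rw [Finset.mul_sum]
          refine Finset.sum_congr rfl fun Z _ => ?_
          rw [ih, ← Finset.mul_sum]
          ring
      _ = _ := by
          rw [key, key2, Nat.factorial_succ, Nat.cast_mul]
          ring

/-- **Key step in the proof of Lemma 1 of the paper.** If `f(∅) = 0`, then for every
`n ≥ 1` and every finite `Y`, `f^{∗n}(Y) = n! ∑_{P partition of Y, |P| = n} ∏_{X ∈ P} f(X)`;
in particular `f^{∗n}(Y) = 0` whenever `|Y| < n`. -/
theorem starPow_eq_factorial_mul_sum_partitions {α : Type*} [DecidableEq α]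
    {A : Type*} [CommRing A] (f : Finset α → A) (hf : f ∅ = 0) (n : ℕ) (hn : 1 ≤ n)
    (Y : Finset α) :
    (starPow f n Y =
        (Nat.factorial n : A) *
          ∑ P ∈ Finset.univ.filter (fun P : Finpartition Y => P.parts.card = n),
            ∏ X ∈ P.parts, f X) ∧
      (Y.card < n → starPow f n Y = 0) := by
  have h : starPow f n Y = (Nat.factorial n : A) *
      ∑ P ∈ Finset.univ.filter (fun P : Finpartition Y => P.parts.card = n),
        ∏ X ∈ P.parts, f X := by
    rw [starPow_eq_aux f hf n Y, ← sum_finpartition (fun p => ∏ X ∈ p, f X)]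
  refine ⟨h, fun hlt => ?_⟩
  rw [h, Finset.filter_false_of_mem, Finset.sum_empty, mul_zero]
  intro P _ hP
  have := P.card_parts_le_card
  omega
end

section
/- Let A be a commutative ℚ-algebra, α a type, and h : {finite subsets of α} → A with h(∅) = 0, with ∗-product (f ∗ h)(Y) := ∑_{Z ⊆ Y} f(Z) h(Y∖Z). Then for every nonempty finite Y ⊆ α, ∑_{n=1}^{|Y|} ((−1)^{n−1}/n) · h^{∗n}(Y) = ∑_{P partition of Y} (−1)^{|P|−1}(|P|−1)! ∏_{X ∈ P} h(X). -/
theorem starPow_eq_sum {α : Type*} [DecidableEq α]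
    {A : Type*} [CommRing A] (h : Finset α → A) (hh : h ∅ = 0) (n : ℕ) (Y : Finset α) :
    starPow h n Y = (n.factorial : A) *
      ∑ P : Finpartition Y with P.parts.card = n, ∏ X ∈ P.parts, h X := by
  induction n generalizing Y with
  | zero =>
    simp only [starPow, Finset.card_eq_zero, Finpartition.parts_eq_empty_iff]
    split_ifs with hY
    · subst hY
      have : ∀ P : Finpartition (∅ : Finset α), P.parts = ∅ := fun P =>
        P.parts_eq_empty_iff.2 rfl
      have hc : Fintype.card (Finpartition (∅ : Finset α)) = 1 :=
        Fintype.card_eq_one_iff.2 ⟨Finpartition.empty _, fun P => by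
          ext1; rw [this, this]⟩
      simp [this, hc]
    · simp [hY]
  | succ n ih =>
    have h1 : starPow h (n+1) Y = (n.factorial : A) * ∑ Z ∈ Y.powerset with Z.Nonempty,
        ∑ Q : Finpartition (Y \ Z) with Q.parts.card = n, h Z * ∏ X ∈ Q.parts, h X := by
      rw [Finset.sum_filter, Finset.mul_sum]
      simp only [starPow, starConv]
      refine Finset.sum_congr rfl fun Z _ => ?_
      split_ifs with hZ
      · rw [ih, ← Finset.mul_sum]; ring
      · rw [Finset.not_nonempty_iff_eq_empty.1 hZ, hh]; simp
    have h2 : ∑ Z ∈ Y.powerset with Z.Nonempty,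
        ∑ Q : Finpartition (Y \ Z) with Q.parts.card = n, h Z * ∏ X ∈ Q.parts, h X =
        ∑ P : Finpartition Y with P.parts.card = n + 1, ∑ Z ∈ P.parts,
          ∏ X ∈ P.parts, h X := by
      rw [Finset.sum_sigma', Finset.sum_sigma']
      have key : ∀ a ∈ (Y.powerset.filter Finset.Nonempty).sigma
          (fun Z => (Finset.univ : Finset (Finpartition (Y \ Z))).filter
            (fun Q => Q.parts.card = n)),
          a.1 ≠ ⊥ ∧ Disjoint (Y \ a.1) a.1 ∧ (Y \ a.1) ⊔ a.1 = Y ∧ a.1 ∉ a.2.parts ∧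
            a.2.parts.card = n := by
        rintro ⟨Z, Q⟩ hZ
        simp only [Finset.mem_sigma, Finset.mem_filter, Finset.mem_powerset,
          Finset.mem_univ, true_and] at hZ
        obtain ⟨⟨hs, hne⟩, hc⟩ := hZ
        refine ⟨hne.ne_empty, Finset.sdiff_disjoint, Finset.sdiff_union_of_subset hs, ?_, hc⟩
        intro hm
        obtain ⟨x, hx⟩ := hne
        exact (Finset.mem_sdiff.1 (Q.subset hm hx)).2 hx
      refine Finset.sum_bij
        (fun a ha => ⟨a.2.extend (key a ha).1 (key a ha).2.1 (key a ha).2.2.1, a.1⟩) ?_ ?_ ?_ ?_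
      · intro a ha
        obtain ⟨k1, k2, k3, k4, k5⟩ := key a ha
        simp [Finset.card_insert_of_notMem k4, k5]
      · rintro ⟨Z, Q⟩ ha ⟨Z', Q'⟩ hb hab
        have ka := (key _ ha).2.2.2.1
        have kb := (key _ hb).2.2.2.1
        obtain ⟨e1, e2⟩ := Sigma.mk.inj hab
        have e2 : Z = Z' := eq_of_heq e2
        subst e2
        have e3 : insert Z Q.parts = insert Z Q'.parts := congrArg Finpartition.parts e1
        have : Q = Q' := by
          ext1
          rw [← Finset.erase_insert ka, ← Finset.erase_insert kb, e3]
        rw [this]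
      · rintro ⟨P, Z⟩ hP
        simp only [Finset.mem_sigma, Finset.mem_filter, Finset.mem_univ, true_and] at hP
        obtain ⟨hc, hZ⟩ := hP
        have hs : (P.parts.erase Z).sup id = Y \ Z := by
          ext x
          simp only [Finset.mem_sup, Finset.mem_erase, id, Finset.mem_sdiff]
          constructor
          · rintro ⟨W, ⟨hne, hW⟩, hx⟩
            exact ⟨P.subset hW hx, fun hxZ => hne (P.eq_of_mem_parts hW hZ hx hxZ)⟩
          · rintro ⟨hx, hxZ⟩
            obtain ⟨W, hW, hxW⟩ := P.exists_mem hx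
            exact ⟨W, ⟨fun e => hxZ (e ▸ hxW), hW⟩, hxW⟩
        refine ⟨⟨Z, P.ofSubset (Finset.erase_subset Z P.parts) hs⟩, ?_, ?_⟩
        · simp only [Finset.mem_sigma, Finset.mem_filter, Finset.mem_univ, true_and,
            Finset.mem_powerset]
          refine ⟨⟨P.subset hZ, P.nonempty_of_mem_parts hZ⟩, ?_⟩
          simp [Finpartition.ofSubset, Finset.card_erase_of_mem hZ, hc]
        · congr 1
          ext1
          exact Finset.insert_erase hZ
      · intro a ha
        obtain ⟨k1, k2, k3, k4, k5⟩ := key a ha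
        simp [Finset.prod_insert k4]
    rw [h1, h2]
    have h3 : ∑ P : Finpartition Y with P.parts.card = n + 1, ∑ Z ∈ P.parts,
          ∏ X ∈ P.parts, h X = ∑ P : Finpartition Y with P.parts.card = n + 1,
          ((n + 1 : ℕ) : A) * ∏ X ∈ P.parts, h X := by
      refine Finset.sum_congr rfl fun P hP => ?_
      rw [Finset.sum_const, (Finset.mem_filter.1 hP).2, nsmul_eq_mul]
    rw [h3, ← Finset.mul_sum, Nat.factorial_succ]
    push_cast
    ring

/-- **Second key step in the proof of Lemma 1 of the paper.** For a commutative
`ℚ`-algebra `A` and `h` with `h(∅) = 0`, the `∗`-logarithm of `1 + h` is the signed sum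
over partitions: for every nonempty finite `Y ⊆ α`,
`∑_{n=1}^{|Y|} ((−1)^{n−1}/n) h^{∗n}(Y) = ∑_{P partition of Y} (−1)^{|P|−1}(|P|−1)! ∏_{X ∈ P} h(X)`. -/
theorem starLog_eq_sum_partitions {α : Type*} [DecidableEq α]
    {A : Type*} [CommRing A] [Algebra ℚ A] (h : Finset α → A) (hh : h ∅ = 0)
    (Y : Finset α) (hY : Y.Nonempty) :
    ∑ n ∈ Finset.Icc 1 Y.card, ((-1 : ℚ) ^ (n - 1) / n) • starPow h n Y =
      ∑ P : Finpartition Y,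
        (-1 : A) ^ (P.parts.card - 1) * (Nat.factorial (P.parts.card - 1) : A) *
          ∏ X ∈ P.parts, h X := by
  classical
  rw [← Finset.sum_fiberwise_of_maps_to (s := Finset.univ) (t := Finset.Icc 1 Y.card)
    (g := fun P : Finpartition Y => P.parts.card)]
  · refine Finset.sum_congr rfl fun n hn => ?_
    rw [starPow_eq_sum h hh, Finset.mul_sum, Finset.smul_sum]
    refine Finset.sum_congr rfl fun P hP => ?_
    rw [(Finset.mem_filter.1 hP).2]
    obtain ⟨m, rfl⟩ : ∃ m, n = m + 1 := ⟨n - 1, by have := (Finset.mem_Icc.1 hn).1; omega⟩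
    rw [Algebra.smul_def, ← mul_assoc]
    congr 1
    have e : ((-1 : ℚ) ^ (m + 1 - 1) / ((m + 1 : ℕ) : ℚ)) * ((m + 1).factorial : ℚ) =
        (-1) ^ m * (m.factorial : ℚ) := by
      rw [Nat.factorial_succ]
      push_cast
      have : (m : ℚ) + 1 ≠ 0 := by positivity
      field_simp
    have e' := congrArg (algebraMap ℚ A) e
    rw [map_mul, map_mul, map_natCast, map_natCast, map_pow, map_neg, map_one] at e'
    simpa using e'
  · intro P _
    exact Finset.mem_Icc.2 ⟨Finset.card_pos.2 (P.parts_nonempty hY.ne_empty),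
      P.card_parts_le_card⟩
end

section
/- Let M be an additive commutative group (e.g. the additive group of a ring), Y a finite set with |Y| ≥ 2, and M(Z) ∈ M given for every nonempty subset Z ⊆ Y. Then ∑_{P partition of Y} (−1)^{|P|−1}(|P|−1)! ∑_{X ∈ P} ∑_{∅ ≠ Z ⊆ X} M(Z) = M(Y). -/
/-- Add a new point `y` to the block `B` of `Q` (or as a new singleton, if `B = ∅`). -/
def addPoint {α : Type*} [DecidableEq α] {S : Finset α} (y : α) (hy : y ∉ S)
    (Q : Finpartition S) (B : Finset α) (hB : B ∈ insert ∅ Q.parts) :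
    Finpartition (insert y S) :=
  Finpartition.ofExistsUnique (insert (insert y B) (Q.parts.erase B))
    (by
      intro p hp
      have hsub : ∀ t ∈ Q.parts, t ⊆ S := fun t ht => Q.subset ht
      grind)
    (by
      intro a ha
      have hsub : ∀ t ∈ Q.parts, t ⊆ S := fun t ht => Q.subset ht
      by_cases hay : a = y
      · subst hay
        refine ⟨insert a B, by simp, ?_⟩
        rintro t ⟨ht, hat⟩
        grind
      · have haS : a ∈ S := by grind
        obtain ⟨t, ⟨ht, hat⟩, -⟩ := Q.existsUnique_mem haS
        have huniq : ∀ u ∈ Q.parts, a ∈ u → u = t := fun u hu hau =>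
          Q.eq_of_mem_parts hu ht hau hat
        by_cases htB : t = B
        · refine ⟨insert y B, by grind, ?_⟩
          rintro u ⟨hu, hau⟩
          grind
        · refine ⟨t, by grind, ?_⟩
          rintro u ⟨hu, hau⟩
          grind)
    (by
      have := Q.empty_notMem_parts
      have : insert y B ≠ ∅ := Finset.insert_ne_empty y B
      grind)

/-- Remove the point `y`. -/
def delPoint {α : Type*} [DecidableEq α] {S : Finset α} (y : α) (hy : y ∉ S)
    (P : Finpartition (insert y S)) : Finpartition S :=
  Finpartition.ofExistsUnique
    ((insert ((P.part y).erase y) (P.parts.erase (P.part y))).erase ∅)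
    (by
      intro p hp
      have hsub : ∀ t ∈ P.parts, t ⊆ insert y S := fun t ht => P.subset ht
      have h1 : P.part y ∈ P.parts := by simp
      have h2 : ∀ t ∈ P.parts, y ∈ t → P.part y = t := fun t ht h => P.part_eq_of_mem ht h
      have := hsub _ h1
      intro a ha
      grind)
    (by
      intro a ha
      have h1 : P.part y ∈ P.parts := by simp
      obtain ⟨t, ⟨ht, hat⟩, -⟩ := P.existsUnique_mem (Finset.mem_insert_of_mem (b := y) ha)
      have huniq : ∀ u ∈ P.parts, a ∈ u → u = t := fun u hu hau =>
          P.eq_of_mem_parts hu ht hau hat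
      by_cases hty : t = P.part y
      · refine ⟨(P.part y).erase y, by grind, ?_⟩
        rintro u ⟨hu, hau⟩
        grind
      · refine ⟨t, by grind, ?_⟩
        rintro u ⟨hu, hau⟩
        grind)
    (by simp)

theorem coeff_zero {α : Type*} [DecidableEq α] (S Z : Finset α) (y : α) (hy : y ∉ S)
    (hZ : Z.Nonempty) (hZS : Z ⊆ S) :
    ∑ P : Finpartition (insert y S),
      (if ∃ X ∈ P.parts, Z ⊆ X then
        ((-1 : ℤ) ^ (P.parts.card - 1) * (Nat.factorial (P.parts.card - 1) : ℤ)) else 0) = 0 := by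
  have hyZ : y ∉ Z := fun h => hy (hZS h)
  have key : ∑ P : Finpartition (insert y S),
      (if ∃ X ∈ P.parts, Z ⊆ X then
        ((-1 : ℤ) ^ (P.parts.card - 1) * (Nat.factorial (P.parts.card - 1) : ℤ)) else 0)
      = ∑ p ∈ (Finset.univ : Finset (Finpartition S)).sigma (fun Q => insert ∅ Q.parts),
        (if ∃ X ∈ p.1.parts, Z ⊆ X then
          (if p.2 = ∅ then ((-1 : ℤ) ^ (p.1.parts.card) * (Nat.factorial (p.1.parts.card) : ℤ))
           else ((-1 : ℤ) ^ (p.1.parts.card - 1) * (Nat.factorial (p.1.parts.card - 1) : ℤ)))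
          else 0) := by
    symm
    refine Finset.sum_bij' (fun p hp => addPoint y hy p.1 p.2 (by simpa using hp))
      (fun P _ => ⟨delPoint y hy P, (P.part y).erase y⟩) (fun _ _ => Finset.mem_univ _)
      ?_ ?_ ?_ ?_
    · intro P _
      simp [delPoint, Finpartition.ofExistsUnique]
      grind
    · rintro ⟨Q, B⟩ hp
      have hB : B ∈ insert ∅ Q.parts := by simpa using hp
      have hsub : ∀ t ∈ Q.parts, t ⊆ S := fun t ht => Q.subset ht
      have hyB : y ∉ B := by grind
      have hpart : (addPoint y hy Q B hB).part y = insert y B := by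
        apply Finpartition.part_eq_of_mem
        · simp [addPoint, Finpartition.ofExistsUnique]
        · simp
      have he := Q.empty_notMem_parts
      have h1 : delPoint y hy (addPoint y hy Q B hB) = Q := by
        apply Finpartition.ext
        simp only [delPoint, Finpartition.ofExistsUnique, hpart]
        simp only [addPoint, Finpartition.ofExistsUnique]
        have hni : insert y B ∉ Q.parts := fun h => hy (hsub _ h (Finset.mem_insert_self y B))
        rw [Finset.erase_insert hyB]
        ext t
        grind
      simp only [h1, hpart, Finset.erase_insert hyB]
    · intro P _
      have h1 : P.part y ∈ P.parts := by simp
      have h2 : y ∈ P.part y := by simp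
      have he := P.empty_notMem_parts
      have h3 : ∀ t ∈ P.parts, ∀ a ∈ t, a ∈ P.part y → t = P.part y :=
        fun t ht a ha hb => P.eq_of_mem_parts ht h1 ha hb
      have h4 : (P.part y).erase y ∉ P.parts := by
        intro h
        obtain ⟨a, ha⟩ := P.nonempty_of_mem_parts h
        have := h3 _ h a ha (Finset.mem_of_mem_erase ha)
        grind
      apply Finpartition.ext
      simp only [addPoint, delPoint, Finpartition.ofExistsUnique]
      rw [Finset.insert_erase h2]
      ext t
      grind
    · rintro ⟨Q, B⟩ hp
      have hB : B ∈ insert ∅ Q.parts := by simpa using hp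
      have hsub : ∀ t ∈ Q.parts, t ⊆ S := fun t ht => Q.subset ht
      have hni : insert y B ∉ Q.parts.erase B := by grind
      have he := Q.empty_notMem_parts
      have hiff : (∃ X ∈ (addPoint y hy Q B hB).parts, Z ⊆ X) ↔ ∃ X ∈ Q.parts, Z ⊆ X := by
        simp only [addPoint, Finpartition.ofExistsUnique]
        have hz : Z ⊆ insert y B ↔ Z ⊆ B := Finset.subset_insert_iff_of_notMem hyZ
        have hz0 : ¬ Z ⊆ ∅ := by
          rw [Finset.subset_empty]; exact hZ.ne_empty
        constructor
        · rintro ⟨X, hX, hZX⟩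
          grind
        · rintro ⟨X, hX, hZX⟩
          by_cases hXB : X = B
          · exact ⟨insert y B, by simp, hz.2 (hXB ▸ hZX)⟩
          · exact ⟨X, by grind, hZX⟩
      have hcard : (addPoint y hy Q B hB).parts.card - 1 =
          if B = ∅ then Q.parts.card else Q.parts.card - 1 := by
        simp only [addPoint, Finpartition.ofExistsUnique]
        rw [Finset.card_insert_of_notMem hni]
        split_ifs with h
        · subst h; rw [Finset.erase_eq_of_notMem he]; simp
        · have : B ∈ Q.parts := by grind
          rw [Finset.card_erase_of_mem this]; simp
      simp only [hiff, hcard]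
      split_ifs <;> rfl
  rw [key, Finset.sum_sigma]
  refine Finset.sum_eq_zero fun Q _ => ?_
  have he := Q.empty_notMem_parts
  simp only
  split_ifs with h
  · rw [Finset.sum_insert he, if_pos rfl, Finset.sum_congr rfl
      (g := fun _ => ((-1 : ℤ) ^ (Q.parts.card - 1) * (Nat.factorial (Q.parts.card - 1) : ℤ)))]
    · obtain ⟨X, hX, -⟩ := h
      have hpos : 0 < Q.parts.card := Finset.card_pos.2 ⟨X, hX⟩
      obtain ⟨k, hk⟩ := Nat.exists_eq_succ_of_ne_zero hpos.ne'
      rw [Finset.sum_const, hk]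
      simp [Nat.factorial_succ, pow_succ]
      ring
    · intro x hx
      rw [if_neg (by rintro rfl; exact he hx)]
  · simp

theorem coeff_one {α : Type*} [DecidableEq α] (Y : Finset α) (hY : Y.Nonempty) :
    ∑ P : Finpartition Y,
      (if ∃ X ∈ P.parts, Y ⊆ X then
        ((-1 : ℤ) ^ (P.parts.card - 1) * (Nat.factorial (P.parts.card - 1) : ℤ)) else 0) = 1 := by
  have hb : Y ≠ ⊥ := hY.ne_empty
  rw [Finset.sum_eq_single (Finpartition.indiscrete hb)]
  · simp
  · intro P _ hP
    rw [if_neg]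
    rintro ⟨X, hX, hYX⟩
    apply hP
    have hXY : X = Y := Finset.Subset.antisymm (P.subset hX) hYX
    subst hXY
    apply Finpartition.ext
    ext t
    simp only [Finpartition.indiscrete_parts, Finset.mem_singleton]
    constructor
    · intro ht
      obtain ⟨a, ha⟩ := P.nonempty_of_mem_parts ht
      exact P.eq_of_mem_parts ht hX ha (P.subset ht ha)
    · rintro rfl; exact hX
  · simp

/-- **Core combinatorial identity of computation (13) of the paper.** For a finite set `Y`
with `|Y| ≥ 2` and elements `M(Z)` of an additive commutative group given for every
nonempty `Z ⊆ Y`,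
`∑_{P partition of Y} (−1)^{|P|−1}(|P|−1)! ∑_{X ∈ P} ∑_{∅ ≠ Z ⊆ X} M(Z) = M(Y)`. -/
theorem sum_partitions_signed_sum_interactions {α : Type*} [DecidableEq α]
    {G : Type*} [AddCommGroup G] (Y : Finset α) (hY : 2 ≤ Y.card) (M : Finset α → G) :
    ∑ P : Finpartition Y,
        ((-1 : ℤ) ^ (P.parts.card - 1) * (Nat.factorial (P.parts.card - 1) : ℤ)) •
          ∑ X ∈ P.parts, ∑ Z ∈ X.powerset.filter (fun Z => Z ≠ ∅), M Z =
      M Y := by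
  have hne : Y.Nonempty := Finset.card_pos.1 (by omega)
  have hinner : ∀ P : Finpartition Y,
      ((-1 : ℤ) ^ (P.parts.card - 1) * (Nat.factorial (P.parts.card - 1) : ℤ)) •
          ∑ X ∈ P.parts, ∑ Z ∈ X.powerset.filter (fun Z => Z ≠ ∅), M Z
      = ∑ Z ∈ Y.powerset.filter (fun Z => Z ≠ ∅),
        (if ∃ X ∈ P.parts, Z ⊆ X then
        ((-1 : ℤ) ^ (P.parts.card - 1) * (Nat.factorial (P.parts.card - 1) : ℤ)) else 0) • M Z := by
    intro P
    rw [← Finset.sum_biUnion]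
    · simp only [ite_smul, zero_smul]
      rw [← Finset.sum_filter, Finset.smul_sum]
      refine Finset.sum_congr ?_ fun _ _ => rfl
      ext Z
      simp only [Finset.mem_biUnion, Finset.mem_filter, Finset.mem_powerset]
      constructor
      · rintro ⟨X, hX, hZ, h0⟩
        exact ⟨⟨hZ.trans (P.subset hX), h0⟩, X, hX, hZ⟩
      · rintro ⟨⟨_, h0⟩, X, hX, hZ⟩
        exact ⟨X, hX, hZ, h0⟩
    · intro X hX X' hX' hXX'
      rw [Function.onFun, Finset.disjoint_left]
      intro Z hZ hZ'
      simp only [Finset.mem_filter, Finset.mem_powerset] at hZ hZ'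
      obtain ⟨a, ha⟩ := Finset.nonempty_iff_ne_empty.2 hZ.2
      exact hXX' (P.eq_of_mem_parts hX hX' (hZ.1 ha) (hZ'.1 ha))
  simp only [hinner]
  rw [Finset.sum_comm]
  simp only [← Finset.sum_smul]
  rw [Finset.sum_eq_single Y]
  · rw [coeff_one Y hne, one_smul]
  · intro Z hZ hZY
    simp only [Finset.mem_filter, Finset.mem_powerset] at hZ
    obtain ⟨y, hyY, hyZ⟩ := Finset.exists_of_ssubset (hZ.1.ssubset_of_ne hZY)
    have h := coeff_zero (Y.erase y) Z y (Finset.notMem_erase y Y)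
      (Finset.nonempty_iff_ne_empty.2 hZ.2) (Finset.subset_erase.2 ⟨hZ.1, hyZ⟩)
    rw [Finset.insert_erase hyY] at h
    rw [h, zero_smul]
  · intro h
    simp [hne.ne_empty] at h
end

section
/- Let M be an additive commutative group, Y a finite set, and X_1, …, X_m (m ≥ 2) a partition of Y into nonempty pairwise disjoint blocks. For each nonempty Z ⊆ Y let M(Z) ∈ M. Then ∑_{Q partition of {1,…,m}} (−1)^{|Q|−1}(|Q|−1)! ∑_{q ∈ Q} ∑_{∅ ≠ Z ⊆ ⋃_{i ∈ q} X_i} M(Z) = ∑_{Z ⊆ Y, Z ∩ X_i ≠ ∅ for every i = 1,…,m} M(Z). -/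
open Finset in
/-- Merge the singleton block `{j}` into the block `b`. -/
def mergePt {m : ℕ} (j : Fin m) (Q : Finpartition (univ : Finset (Fin m))) (b : Finset (Fin m))
    (hj : {j} ∈ Q.parts) (hb : b ∈ Q.parts) (hbj : b ≠ {j}) :
    Finpartition (univ : Finset (Fin m)) :=
  Finpartition.ofExistsUnique (insert (insert j b) ((Q.parts.erase {j}).erase b))
    (fun p _ => subset_univ p)
    (by
      intro a _
      obtain ⟨t, ⟨ht, hat⟩, -⟩ := Q.existsUnique_mem (mem_univ a)
      have key : ∀ u ∈ Q.parts, ∀ v ∈ Q.parts, ∀ x, x ∈ u → x ∈ v → u = v :=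
        fun u hu v hv x h1 h2 => Q.eq_of_mem_parts hu hv h1 h2
      have hjj : j ∈ ({j} : Finset (Fin m)) := mem_singleton_self j
      by_cases h : a ∈ insert j b
      · refine ⟨insert j b, ⟨mem_insert_self _ _, h⟩, ?_⟩
        rintro y ⟨hy, hay⟩
        rw [mem_insert] at hy
        rcases hy with hy | hy
        · exact hy
        · exfalso
          simp only [mem_erase] at hy
          rcases mem_insert.1 h with rfl | h
          · exact hy.2.1 (key _ hy.2.2 _ hj _ hay hjj)
          · exact hy.1 (key _ hy.2.2 _ hb _ hay h)
      · rw [mem_insert, not_or] at h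
        refine ⟨t, ⟨?_, hat⟩, ?_⟩
        · rw [mem_insert, mem_erase, mem_erase]
          right
          refine ⟨?_, ?_, ht⟩
          · rintro rfl; exact h.2 hat
          · rintro rfl; exact h.1 (mem_singleton.1 hat)
        · rintro y ⟨hy, hay⟩
          rw [mem_insert, mem_erase, mem_erase] at hy
          rcases hy with rfl | hy
          · rcases mem_insert.1 hay with h' | h'
            · exact absurd h' h.1
            · exact absurd h' h.2
          · exact key _ hy.2.2 _ ht _ hay hat)
    (by
      intro h
      rw [mem_insert, mem_erase, mem_erase] at h
      rcases h with h | h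
      · exact (insert_ne_empty _ _) h.symm
      · exact Q.empty_notMem_parts h.2.2)

open Finset in
/-- Split the point `j` off its block. -/
def splitPt {m : ℕ} (j : Fin m) (Q : Finpartition (univ : Finset (Fin m)))
    (hj : {j} ∉ Q.parts) :
    Finpartition (univ : Finset (Fin m)) :=
  Finpartition.ofExistsUnique
    (insert {j} (insert ((Q.part j).erase j) (Q.parts.erase (Q.part j))))
    (fun p _ => subset_univ p)
    (by
      intro a _
      have hp : Q.part j ∈ Q.parts := Q.part_mem.2 (mem_univ j)
      have hjp : j ∈ Q.part j := Q.mem_part_self.2 (mem_univ j)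
      obtain ⟨t, ⟨ht, hat⟩, -⟩ := Q.existsUnique_mem (mem_univ a)
      have key : ∀ u ∈ Q.parts, ∀ v ∈ Q.parts, ∀ x, x ∈ u → x ∈ v → u = v :=
        fun u hu v hv x h1 h2 => Q.eq_of_mem_parts hu hv h1 h2
      generalize Q.part j = p at *
      by_cases h : a = j
      · subst h
        refine ⟨{a}, ⟨mem_insert_self _ _, mem_singleton_self _⟩, ?_⟩
        rintro y ⟨hy, hay⟩
        rw [mem_insert, mem_insert, mem_erase] at hy
        rcases hy with hy | rfl | hy
        · exact hy
        · exact absurd hay (notMem_erase _ _)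
        · exact absurd (key _ hy.2 _ hp _ hay hjp) hy.1
      · by_cases h2 : a ∈ p
        · refine ⟨p.erase j, ⟨by simp, mem_erase.2 ⟨h, h2⟩⟩, ?_⟩
          rintro y ⟨hy, hay⟩
          rw [mem_insert, mem_insert, mem_erase] at hy
          rcases hy with rfl | hy | hy
          · exact absurd (mem_singleton.1 hay) h
          · exact hy
          · exact absurd (key _ hy.2 _ hp _ hay h2) hy.1
        · refine ⟨t, ⟨?_, hat⟩, ?_⟩
          · rw [mem_insert, mem_insert, mem_erase]
            right; right
            refine ⟨?_, ht⟩
            rintro rfl; exact h2 hat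
          · rintro y ⟨hy, hay⟩
            rw [mem_insert, mem_insert, mem_erase] at hy
            rcases hy with rfl | rfl | hy
            · exact absurd (mem_singleton.1 hay) h
            · exact absurd (mem_of_mem_erase hay) h2
            · exact key _ hy.2 _ ht _ hay hat)
    (by
      have hp : Q.part j ∈ Q.parts := Q.part_mem.2 (mem_univ j)
      have hjp : j ∈ Q.part j := Q.mem_part_self.2 (mem_univ j)
      intro h
      rw [mem_insert, mem_insert, mem_erase] at h
      rcases h with h | h | h
      · exact (singleton_ne_empty _) h.symm
      · rw [eq_comm, erase_eq_empty_iff] at h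
        rcases h with h | h
        · simp [h] at hjp
        · exact hj (h ▸ hp)
      · exact Q.empty_notMem_parts h.2)

open Finset in
theorem coeff_zero_s8 {m : ℕ} (T : Finset (Fin m)) (hT : T.Nonempty) (j : Fin m) (hjT : j ∉ T) :
    ∑ Q : Finpartition (univ : Finset (Fin m)),
      ((-1 : ℤ) ^ (Q.parts.card - 1) * (Nat.factorial (Q.parts.card - 1) : ℤ)) *
        (if ∃ q ∈ Q.parts, T ⊆ q then 1 else 0) = 0 := by
  classical
  set f : Finpartition (univ : Finset (Fin m)) → ℤ :=
    fun Q => (if ∃ q ∈ Q.parts, T ⊆ q then 1 else 0) with hf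
  set w : ℕ → ℤ := fun n => (-1 : ℤ) ^ (n - 1) * (Nat.factorial (n - 1) : ℤ) with hw
  change ∑ Q : Finpartition (univ : Finset (Fin m)), w Q.parts.card * f Q = 0
  rw [← sum_filter_add_sum_filter_not univ
    (fun Q : Finpartition (univ : Finset (Fin m)) => {j} ∈ Q.parts)]
  have key : ∀ (Q : Finpartition (univ : Finset (Fin m))), ∀ u ∈ Q.parts, ∀ v ∈ Q.parts,
      ∀ x, x ∈ u → x ∈ v → u = v :=
    fun Q u hu v hv x h1 h2 => Q.eq_of_mem_parts hu hv h1 h2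
  obtain ⟨t0, ht0⟩ := hT
  have ht0j : t0 ≠ j := fun h => hjT (h ▸ ht0)
  have h2 : ∀ Q : Finpartition (univ : Finset (Fin m)), {j} ∈ Q.parts → 2 ≤ Q.parts.card := by
    intro Q hQ
    obtain ⟨t, ht, ht0t⟩ := Q.exists_mem (mem_univ t0)
    have : ({j} : Finset (Fin m)) ≠ t := by
      rintro rfl; exact ht0j (mem_singleton.1 ht0t)
    exact one_lt_card.2 ⟨_, hQ, _, ht, this⟩
  have step1 : ∑ Q : Finpartition (univ : Finset (Fin m)) with {j} ∈ Q.parts,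
      w Q.parts.card * f Q = - ∑ Q : Finpartition (univ : Finset (Fin m)) with {j} ∈ Q.parts,
        ∑ b ∈ Q.parts.erase {j}, w (Q.parts.card - 1) * f Q := by
    rw [← sum_neg_distrib]
    refine sum_congr rfl fun Q hQ => ?_
    have hQ := (mem_filter.1 hQ).2
    rw [sum_const, card_erase_of_mem hQ]
    obtain ⟨k, hk⟩ := Nat.exists_eq_add_of_le (h2 Q hQ)
    rw [hk]
    simp only [hw]
    have e1 : 2 + k - 1 = k + 1 := by omega
    have e2 : k + 1 - 1 = k := by omega
    rw [e1, e2, Nat.factorial_succ, pow_succ, nsmul_eq_mul]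
    push_cast
    ring
  rw [step1, neg_add_eq_zero, sum_sigma']
  refine sum_bij'
    (fun x hx => mergePt j x.1 x.2 (mem_filter.1 (mem_sigma.1 hx).1).2
      (mem_of_mem_erase (mem_sigma.1 hx).2) (ne_of_mem_erase (mem_sigma.1 hx).2))
    (fun Q hQ => ⟨splitPt j Q (mem_filter.1 hQ).2, (Q.part j).erase j⟩) ?_ ?_ ?_ ?_ ?_
  · rintro ⟨Q, b⟩ hx
    have hj := (mem_filter.1 (mem_sigma.1 hx).1).2
    have hb := mem_of_mem_erase (mem_sigma.1 hx).2
    have hbj := ne_of_mem_erase (mem_sigma.1 hx).2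
    dsimp only at hj hb hbj ⊢
    refine mem_filter.2 ⟨mem_univ _, ?_⟩
    change {j} ∉ insert (insert j b) ((Q.parts.erase {j}).erase b)
    rw [mem_insert, mem_erase, mem_erase]
    rintro (h | h)
    · obtain ⟨x, hxb⟩ := Q.nonempty_of_mem_parts hb
      have : x = j := by
        have : x ∈ ({j} : Finset (Fin m)) := h ▸ mem_insert_of_mem hxb
        exact mem_singleton.1 this
      subst this
      exact hbj (key Q _ hb _ hj _ hxb (mem_singleton_self _))
    · exact h.2.1 rfl
  · intro Q hQ
    have hj := (mem_filter.1 hQ).2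
    refine mem_sigma.2 ⟨mem_filter.2 ⟨mem_univ _, mem_insert_self _ _⟩, mem_erase.2 ⟨?_, ?_⟩⟩
    · intro h
      have : j ∈ (Q.part j).erase j := by
        dsimp only at h
        rw [h]; exact mem_singleton_self j
      exact notMem_erase _ _ this
    · exact mem_insert_of_mem (mem_insert_self _ _)
  · rintro ⟨Q, b⟩ hx
    have hj := (mem_filter.1 (mem_sigma.1 hx).1).2
    have hb := mem_of_mem_erase (mem_sigma.1 hx).2
    have hbj := ne_of_mem_erase (mem_sigma.1 hx).2
    dsimp only at hj hb hbj
    have hjb : j ∉ b := fun h => hbj (key Q _ hb _ hj _ h (mem_singleton_self _))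
    have hpart : (mergePt j Q b hj hb hbj).part j = insert j b :=
      Finpartition.part_eq_of_mem _ (mem_insert_self _ _) (mem_insert_self _ _)
    have hnot : insert j b ∉ (Q.parts.erase {j}).erase b := by
      intro h
      rw [mem_erase, mem_erase] at h
      exact h.2.1 (key Q _ h.2.2 _ hj _ (mem_insert_self _ _) (mem_singleton_self _))
    refine Sigma.ext ?_ (heq_of_eq ?_)
    · apply Finpartition.ext
      change insert {j} (insert (((mergePt j Q b hj hb hbj).part j).erase j)
        ((insert (insert j b) ((Q.parts.erase {j}).erase b)).erase
          ((mergePt j Q b hj hb hbj).part j))) = Q.parts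
      rw [hpart, erase_insert hjb, erase_insert hnot,
        insert_erase (mem_erase.2 ⟨hbj, hb⟩), insert_erase hj]
    · change ((mergePt j Q b hj hb hbj).part j).erase j = b
      rw [hpart, erase_insert hjb]
  · intro Q hQ
    have hj := (mem_filter.1 hQ).2
    have hp : Q.part j ∈ Q.parts := Q.part_mem.2 (mem_univ j)
    have hjp : j ∈ Q.part j := Q.mem_part_self.2 (mem_univ j)
    apply Finpartition.ext
    change insert (insert j ((Q.part j).erase j)) (((insert {j} (insert ((Q.part j).erase j)
      (Q.parts.erase (Q.part j)))).erase {j}).erase ((Q.part j).erase j)) = Q.parts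
    have hne : ((Q.part j).erase j).Nonempty := by
      rw [nonempty_iff_ne_empty, Ne, erase_eq_empty_iff]
      rintro (h | h)
      · simp [h] at hjp
      · exact hj (h ▸ hp)
    obtain ⟨x, hx⟩ := hne
    have n1 : {j} ∉ insert ((Q.part j).erase j) (Q.parts.erase (Q.part j)) := by
      rw [mem_insert, not_or]
      refine ⟨fun h => ?_, fun h => hj (mem_of_mem_erase h)⟩
      have : j ∈ (Q.part j).erase j := h ▸ mem_singleton_self j
      exact notMem_erase _ _ this
    have n2 : (Q.part j).erase j ∉ Q.parts.erase (Q.part j) := by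
      intro h
      exact ne_of_mem_erase h
        (key Q _ (mem_of_mem_erase h) _ hp _ hx (mem_of_mem_erase hx))
    rw [erase_insert n1, erase_insert n2, insert_erase hjp, insert_erase hp]
  · rintro ⟨Q, b⟩ hx
    have hj := (mem_filter.1 (mem_sigma.1 hx).1).2
    have hb := mem_of_mem_erase (mem_sigma.1 hx).2
    have hbj := ne_of_mem_erase (mem_sigma.1 hx).2
    dsimp only at hj hb hbj ⊢
    have hnot : insert j b ∉ (Q.parts.erase {j}).erase b := by
      intro h
      rw [mem_erase, mem_erase] at h
      exact h.2.1 (key Q _ h.2.2 _ hj _ (mem_insert_self _ _) (mem_singleton_self _))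
    have hparts : (mergePt j Q b hj hb hbj).parts =
      insert (insert j b) ((Q.parts.erase {j}).erase b) := rfl
    have hcard : (mergePt j Q b hj hb hbj).parts.card = Q.parts.card - 1 := by
      rw [hparts, card_insert_of_notMem hnot, card_erase_of_mem (mem_erase.2 ⟨hbj, hb⟩),
        card_erase_of_mem hj]
      have := h2 Q hj
      omega
    rw [hcard]
    congr 1
    simp only [hf, hparts]
    refine if_congr ⟨?_, ?_⟩ rfl rfl
    · rintro ⟨q, hq, hTq⟩
      by_cases hqb : q = b
      · exact ⟨_, mem_insert_self _ _, hqb ▸ hTq.trans (subset_insert _ _)⟩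
      · refine ⟨q, mem_insert_of_mem (mem_erase.2 ⟨hqb, mem_erase.2 ⟨?_, hq⟩⟩), hTq⟩
        rintro rfl
        exact ht0j (mem_singleton.1 (hTq ht0))
    · rintro ⟨q, hq, hTq⟩
      rcases mem_insert.1 hq with rfl | hq
      · exact ⟨b, hb, (subset_insert_iff_of_notMem hjT).1 hTq⟩
      · exact ⟨q, mem_of_mem_erase (mem_of_mem_erase hq), hTq⟩

open Finset in
theorem coeff_one_s8 {m : ℕ} (hm : 0 < m) :
    ∑ Q : Finpartition (univ : Finset (Fin m)),
      ((-1 : ℤ) ^ (Q.parts.card - 1) * (Nat.factorial (Q.parts.card - 1) : ℤ)) *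
        (if ∃ q ∈ Q.parts, univ ⊆ q then 1 else 0) = 1 := by
  classical
  have hne : (univ : Finset (Fin m)) ≠ ⊥ := by
    rw [bot_eq_empty, ← nonempty_iff_ne_empty]
    exact ⟨⟨0, hm⟩, mem_univ _⟩
  rw [sum_eq_single (Finpartition.indiscrete hne)]
  · simp [Finpartition.indiscrete]
  · intro Q _ hQ
    rw [if_neg, mul_zero]
    rintro ⟨q, hq, hu⟩
    apply hQ
    have hq' : q = univ := univ_subset_iff.1 hu
    subst hq'
    apply Finpartition.ext
    ext p
    simp only [Finpartition.indiscrete, mem_singleton]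
    constructor
    · intro hp
      obtain ⟨x, hx⟩ := Q.nonempty_of_mem_parts hp
      exact Q.eq_of_mem_parts hp hq hx (mem_univ _)
    · rintro rfl; exact hq
  · simp


/-- **Identity behind formulas (6)–(7) of the paper.** Let `X_1, …, X_m` (`m ≥ 2`) be a
partition of the finite set `Y` into nonempty pairwise disjoint blocks and let `M(Z)` be
elements of an additive commutative group given for the nonempty subsets `Z ⊆ Y`. Then
`∑_{Q partition of {1,…,m}} (−1)^{|Q|−1}(|Q|−1)! ∑_{q ∈ Q} ∑_{∅ ≠ Z ⊆ ⋃_{i ∈ q} X_i} M(Z)`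
equals the sum of `M(Z)` over the subsets `Z ⊆ Y` meeting every block `X_i`. -/
theorem sum_partitions_blocks_signed_eq_sum_meeting_all_blocks {α : Type*} [DecidableEq α]
    {G : Type*} [AddCommGroup G] (Y : Finset α) (m : ℕ) (hm : 2 ≤ m)
    (X : Fin m → Finset α) (hne : ∀ i, (X i).Nonempty)
    (hdisj : ∀ i j, i ≠ j → Disjoint (X i) (X j))
    (hY : Finset.univ.biUnion X = Y) (M : Finset α → G) :
    ∑ Q : Finpartition (Finset.univ : Finset (Fin m)),
        ((-1 : ℤ) ^ (Q.parts.card - 1) * (Nat.factorial (Q.parts.card - 1) : ℤ)) •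
          ∑ q ∈ Q.parts, ∑ Z ∈ (q.biUnion X).powerset.filter (fun Z => Z ≠ ∅), M Z =
      ∑ Z ∈ Y.powerset.filter (fun Z => ∀ i, (Z ∩ X i).Nonempty), M Z := by
  classical
  set S : Finset α → Finset (Fin m) := fun Z => Finset.univ.filter (fun i => (Z ∩ X i).Nonempty)
    with hS
  have hsub : ∀ Z, Z ⊆ Y → ∀ q : Finset (Fin m), Z ⊆ q.biUnion X ↔ S Z ⊆ q := by
    intro Z hZ q
    constructor
    · intro h i hi
      obtain ⟨x, hx⟩ := (Finset.mem_filter.1 hi).2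
      rw [Finset.mem_inter] at hx
      obtain ⟨k, hk, hxk⟩ := Finset.mem_biUnion.1 (h hx.1)
      by_contra hiq
      have hik : i ≠ k := fun e => hiq (e ▸ hk)
      exact Finset.disjoint_left.1 (hdisj i k hik) hx.2 hxk
    · intro h x hx
      have hxY := hZ hx
      rw [← hY] at hxY
      obtain ⟨k, -, hxk⟩ := Finset.mem_biUnion.1 hxY
      exact Finset.mem_biUnion.2 ⟨k, h (Finset.mem_filter.2 ⟨Finset.mem_univ _,
        ⟨x, Finset.mem_inter.2 ⟨hx, hxk⟩⟩⟩), hxk⟩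
  have hSne : ∀ Z, Z ⊆ Y → Z ≠ ∅ → (S Z).Nonempty := by
    intro Z hZ hne'
    rw [Finset.nonempty_iff_ne_empty]
    intro h
    have := (hsub Z hZ ∅).2 h.le
    simp only [Finset.biUnion_empty, Finset.subset_empty] at this
    exact hne' this
  have inner : ∀ Q : Finpartition (Finset.univ : Finset (Fin m)),
      ∑ q ∈ Q.parts, ∑ Z ∈ (q.biUnion X).powerset.filter (fun Z => Z ≠ ∅), M Z =
      ∑ Z ∈ Y.powerset.filter (fun Z => Z ≠ ∅),
        (if ∃ q ∈ Q.parts, S Z ⊆ q then (1 : ℤ) else 0) • M Z := by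
    intro Q
    have h1 : ∀ q ∈ Q.parts, ∑ Z ∈ (q.biUnion X).powerset.filter (fun Z => Z ≠ ∅), M Z =
        ∑ Z ∈ Y.powerset.filter (fun Z => Z ≠ ∅), if S Z ⊆ q then M Z else 0 := by
      intro q _
      rw [← Finset.sum_filter]
      refine Finset.sum_congr ?_ fun _ _ => rfl
      ext Z
      simp only [Finset.mem_filter, Finset.mem_powerset]
      constructor
      · rintro ⟨h, h'⟩
        have hZY : Z ⊆ Y := by
          rw [← hY]
          exact h.trans (Finset.biUnion_subset_biUnion_of_subset_left _ (Finset.subset_univ _))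
        exact ⟨⟨hZY, h'⟩, (hsub Z hZY q).1 h⟩
      · rintro ⟨⟨h, h'⟩, h''⟩
        exact ⟨(hsub Z h q).2 h'', h'⟩
    rw [Finset.sum_congr rfl h1, Finset.sum_comm]
    refine Finset.sum_congr rfl fun Z hZ => ?_
    rw [Finset.mem_filter, Finset.mem_powerset] at hZ
    obtain ⟨i, hi⟩ := hSne Z hZ.1 hZ.2
    by_cases hq : ∃ q ∈ Q.parts, S Z ⊆ q
    · rw [if_pos hq, one_smul]
      obtain ⟨q, hq, hSq⟩ := hq
      rw [Finset.sum_eq_single q, if_pos hSq]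
      · intro p hp hpq
        rw [if_neg]
        intro hSp
        exact hpq (Q.eq_of_mem_parts hp hq (hSp hi) (hSq hi))
      · intro h; exact absurd hq h
    · rw [if_neg hq, zero_smul]
      refine Finset.sum_eq_zero fun q hq' => if_neg fun h => hq ⟨q, hq', h⟩
  simp_rw [inner, Finset.smul_sum, smul_smul]
  rw [Finset.sum_comm]
  simp_rw [← Finset.sum_smul]
  have hfil : Y.powerset.filter (fun Z => ∀ i, (Z ∩ X i).Nonempty) =
      (Y.powerset.filter (fun Z => Z ≠ ∅)).filter (fun Z => S Z = Finset.univ) := by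
    ext Z
    simp only [Finset.mem_filter, hS, Finset.filter_eq_self, Finset.mem_univ, true_imp_iff]
    constructor
    · rintro ⟨h, h'⟩
      refine ⟨⟨h, ?_⟩, fun i => h' i⟩
      rintro rfl
      simpa using h' ⟨0, by omega⟩
    · rintro ⟨⟨h, -⟩, h'⟩
      exact ⟨h, fun i => h' i⟩
  rw [hfil, Finset.sum_filter (fun Z => S Z = Finset.univ)]
  refine Finset.sum_congr rfl fun Z hZ => ?_
  rw [Finset.mem_filter, Finset.mem_powerset] at hZ
  split_ifs with h
  · rw [h, coeff_one_s8 (by omega), one_smul]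
  · obtain ⟨j, hj⟩ : ∃ j, j ∉ S Z := by
      by_contra! hc
      exact h (Finset.eq_univ_iff_forall.2 hc)
    rw [coeff_zero_s8 (S Z) (hSne Z hZ.1 hZ.2) j hj, zero_smul]
end

section
/- For every n ≥ 1 and every real number c ≥ 1, ∑_{P partition of an n-element set} c^{|P|} ∑_{Q partition of the set of blocks of P} (|Q|−1)! ≤ n! · e^{2n+1} · c^n. -/
section Helpers
open Finset

variable {α : Type*} [DecidableEq α]

theorem restrict_parts_aux {a : α} {s : Finset α} (ha : a ∉ s)
    (P : Finpartition (insert a s)) :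
    (P.restrict (Finset.subset_insert a s)).parts =
      (insert ((P.part a).erase a) (P.parts.erase (P.part a))).erase ∅ := by
  have hB : P.part a ∈ P.parts := P.part_mem.2 (mem_insert_self a s)
  have haB : a ∈ P.part a := P.mem_part_self.2 (mem_insert_self a s)
  have hBs : P.part a ∩ s = (P.part a).erase a := by
    have := P.subset hB
    ext x
    have := @this x
    simp only [mem_inter, mem_erase, mem_insert] at *
    grind
  have hq : ∀ q ∈ P.parts, q ≠ P.part a → q ∩ s = q := by
    intro q hq hne
    have haq : a ∉ q := fun h => hne (P.part_eq_of_mem hq h).symm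
    have := P.subset hq
    grind
  change (P.parts.image (· ∩ s)).erase ∅ = _
  congr 1
  conv_lhs => rw [← insert_erase hB]
  rw [image_insert, hBs]
  congr 1
  ext q
  simp only [mem_image, mem_erase]
  constructor
  · rintro ⟨r, ⟨h1, h2⟩, rfl⟩
    rw [hq r h2 h1]; exact ⟨h1, h2⟩
  · rintro ⟨h1, h2⟩
    exact ⟨q, ⟨h1, h2⟩, hq q h2 h1⟩

theorem erase_notMem_aux {a : α} {s : Finset α} (P : Finpartition (insert a s)) :
    (P.part a).erase a ∉ P.parts := by
  have hB : P.part a ∈ P.parts := P.part_mem.2 (mem_insert_self a s)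
  have haB : a ∈ P.part a := P.mem_part_self.2 (mem_insert_self a s)
  intro h
  obtain ⟨x, hx⟩ := P.nonempty_of_mem_parts h
  have := P.eq_of_mem_parts h hB hx (mem_of_mem_erase hx)
  rw [← this] at haB
  simp at haB

theorem parts_eq_aux {a : α} {s : Finset α} (ha : a ∉ s)
    (P : Finpartition (insert a s)) :
    P.parts = insert (insert a ((P.part a).erase a))
      ((P.restrict (Finset.subset_insert a s)).parts.erase ((P.part a).erase a)) := by
  have hB : P.part a ∈ P.parts := P.part_mem.2 (mem_insert_self a s)
  have haB : a ∈ P.part a := P.mem_part_self.2 (mem_insert_self a s)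
  have ht := erase_notMem_aux P
  have h0 := P.empty_notMem_parts
  rw [restrict_parts_aux ha, insert_erase haB]
  ext q
  simp only [mem_insert, mem_erase]
  grind

theorem card_parts_aux {a : α} {s : Finset α} (ha : a ∉ s)
    (P : Finpartition (insert a s)) :
    #P.parts = if (P.part a).erase a = ∅ then #(P.restrict (Finset.subset_insert a s)).parts + 1
      else #(P.restrict (Finset.subset_insert a s)).parts := by
  have hB : P.part a ∈ P.parts := P.part_mem.2 (mem_insert_self a s)
  have ht := erase_notMem_aux P
  have h0 := P.empty_notMem_parts
  have hc := card_erase_add_one hB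
  rw [restrict_parts_aux ha]
  split_ifs with h
  · rw [h, erase_insert (fun h' => h0 (mem_of_mem_erase h')), hc]
  · rw [erase_eq_of_notMem, card_insert_of_notMem (fun h' => ht (mem_of_mem_erase h')), hc]
    grind

theorem sum_step_aux {a : α} {s : Finset α} (ha : a ∉ s) (w : ℕ → ℝ)
    (hw : ∀ k, 0 ≤ w k) :
    ∑ P : Finpartition (insert a s), w #P.parts ≤
      ∑ P : Finpartition s, (w (#P.parts + 1) + #P.parts * w #P.parts) := by
  classical
  let f : Finpartition (insert a s) → (_ : Finpartition s) × Finset α :=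
    fun P => ⟨P.restrict (Finset.subset_insert a s), (P.part a).erase a⟩
  let g : ((_ : Finpartition s) × Finset α) → ℝ :=
    fun x => if x.2 = ∅ then w (#x.1.parts + 1) else w #x.1.parts
  have hf : Function.Injective f := by
    intro P Q h
    have h1 : P.restrict (Finset.subset_insert a s) = Q.restrict (Finset.subset_insert a s) :=
      congrArg Sigma.fst h
    have h2 : (P.part a).erase a = (Q.part a).erase a := congrArg (fun x => x.2) h
    apply Finpartition.ext
    rw [parts_eq_aux ha P, parts_eq_aux ha Q, h1, h2]
  have e1 : ∀ P : Finpartition (insert a s), w #P.parts = g (f P) := by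
    intro P
    simp only [f, g]
    rw [card_parts_aux ha P]
    split_ifs <;> rfl
  have hg : ∀ x, 0 ≤ g x := fun x => by simp only [g]; split_ifs <;> exact hw _
  calc ∑ P : Finpartition (insert a s), w #P.parts
      = ∑ x ∈ univ.image f, g x := by
        rw [sum_image hf.injOn]
        exact sum_congr rfl fun P _ => e1 P
    _ ≤ ∑ x ∈ (univ : Finset (Finpartition s)).sigma (fun P => insert ∅ P.parts), g x := by
        apply sum_le_sum_of_subset_of_nonneg _ fun x _ _ => hg x
        intro x hx
        obtain ⟨P, -, rfl⟩ := mem_image.1 hx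
        simp only [mem_sigma, mem_univ, true_and, f]
        rw [restrict_parts_aux ha]
        grind
    _ = _ := by
        rw [sum_sigma]
        refine sum_congr rfl fun P _ => ?_
        rw [sum_insert P.empty_notMem_parts]
        simp only [g, if_true]
        congr 1
        rw [sum_congr rfl (g := fun _ => w #P.parts), sum_const, nsmul_eq_mul]
        intro t ht
        rw [if_neg (P.ne_empty ht)]

theorem sum_factorial_pow_le (x : ℝ) (hx : 0 ≤ x) (s : Finset α) :
    ∑ P : Finpartition s, ((#P.parts).factorial : ℝ) * x ^ #P.parts ≤
      ((#s).factorial : ℝ) * (1 + x) ^ #s := by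
  induction s using Finset.induction_on with
  | empty =>
    have h : ∀ P : Finpartition (∅ : Finset α), #P.parts = 0 := fun P => by
      have := P.card_parts_le_card
      simpa using this
    have hs : Subsingleton (Finpartition (∅ : Finset α)) := ⟨fun P Q => by
      apply Finpartition.ext
      rw [card_eq_zero.1 (h P), card_eq_zero.1 (h Q)]⟩
    have hc : Fintype.card (Finpartition (∅ : Finset α)) ≤ 1 :=
      Fintype.card_le_one_iff_subsingleton.2 hs
    simp only [h]
    simpa using hc
  | insert a s ha ih =>
    refine (sum_step_aux ha (fun k => (k.factorial : ℝ) * x ^ k)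
      (fun k => by positivity)).trans ?_
    rw [card_insert_of_notMem ha]
    calc _ ≤ ∑ P : Finpartition s, ((#s + 1 : ℝ) * (1 + x)) *
          (((#P.parts).factorial : ℝ) * x ^ #P.parts) := by
          refine sum_le_sum fun P _ => ?_
          have hk : (#P.parts : ℝ) ≤ #s := by exact_mod_cast P.card_parts_le_card
          have hp : 0 ≤ ((#P.parts).factorial : ℝ) * x ^ #P.parts := by positivity
          rw [Nat.factorial_succ, pow_succ]
          push_cast
          calc _ = ((#P.parts + 1 : ℝ) * x + #P.parts) *
                (((#P.parts).factorial : ℝ) * x ^ #P.parts) := by ring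
            _ ≤ _ := by
              apply mul_le_mul_of_nonneg_right _ hp
              nlinarith
      _ ≤ ((#s + 1 : ℝ) * (1 + x)) * (((#s).factorial : ℝ) * (1 + x) ^ #s) := by
          rw [← mul_sum]
          exact mul_le_mul_of_nonneg_left ih (by positivity)
      _ = _ := by
          rw [Nat.factorial_succ]; push_cast; ring

theorem sum_factorial_pow_le' (x : ℝ) (hx : 0 ≤ x) (s : Finset α)
    (inst : Fintype (Finpartition s)) :
    ∑ P : Finpartition s, ((#P.parts).factorial : ℝ) * x ^ #P.parts ≤
      ((#s).factorial : ℝ) * (1 + x) ^ #s := by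
  convert sum_factorial_pow_le x hx s

end Helpers


/-- **Counting estimate (20) in the proof of Theorem 2 of the paper.** For every `n ≥ 1`
and every real `c ≥ 1`,
`∑_{P partition of an n-element set} c^{|P|} ∑_{Q partition of the blocks of P} (|Q|−1)!`
is at most `n! e^{2n+1} c^n`. -/
theorem sum_partitions_pow_sum_partitions_factorial_le (n : ℕ) (hn : 1 ≤ n)
    (c : ℝ) (hc : 1 ≤ c) :
    ∑ P : Finpartition (Finset.univ : Finset (Fin n)),
        c ^ P.parts.card *
          ∑ Q : Finpartition P.parts, ((Nat.factorial (Q.parts.card - 1) : ℝ)) ≤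
      (Nat.factorial n : ℝ) * Real.exp (2 * n + 1) * c ^ n := by
  have hin : ∀ P : Finpartition (Finset.univ : Finset (Fin n)),
      ∑ Q : Finpartition P.parts, ((Nat.factorial (Q.parts.card - 1) : ℝ)) ≤
        (P.parts.card.factorial : ℝ) * 2 ^ P.parts.card := by
    intro P
    have h := sum_factorial_pow_le' 1 zero_le_one P.parts inferInstance
    norm_num at h
    refine le_trans (Finset.sum_le_sum fun Q _ => ?_) h
    exact_mod_cast Nat.factorial_le (Nat.sub_le _ _)
  have hout := sum_factorial_pow_le' 2 zero_le_two (Finset.univ : Finset (Fin n)) inferInstance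
  rw [Finset.card_univ, Fintype.card_fin] at hout
  have hc0 : (0 : ℝ) ≤ c ^ n := by positivity
  have he : (1 + 2 : ℝ) ^ n ≤ Real.exp (2 * n + 1) := by
    have h3 : (1 + 2 : ℝ) ≤ Real.exp 2 := by linarith [Real.add_one_le_exp (2 : ℝ)]
    calc (1 + 2 : ℝ) ^ n ≤ Real.exp 2 ^ n := pow_le_pow_left₀ (by norm_num) h3 n
      _ = Real.exp (2 * n) := by rw [← Real.exp_nat_mul, mul_comm]
      _ ≤ _ := Real.exp_le_exp.2 (by linarith)
  calc _ ≤ ∑ P : Finpartition (Finset.univ : Finset (Fin n)),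
        c ^ n * ((P.parts.card.factorial : ℝ) * 2 ^ P.parts.card) := by
        refine Finset.sum_le_sum fun P _ => ?_
        have hk : P.parts.card ≤ n := by simpa using P.card_parts_le_card
        exact mul_le_mul (pow_le_pow_right₀ hc hk) (hin P)
          (Finset.sum_nonneg fun _ _ => by positivity) hc0
    _ ≤ c ^ n * ((n.factorial : ℝ) * (1 + 2) ^ n) := by
        rw [← Finset.mul_sum]
        exact mul_le_mul_of_nonneg_left hout hc0
    _ ≤ c ^ n * ((n.factorial : ℝ) * Real.exp (2 * n + 1)) := by gcongr
    _ = _ := by ring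
end

section
/- Let A be a commutative ring, α a type, and for each t ∈ ℝ and each finite subset Y ⊆ α let 𝒢_t(Y) : A → A be a map satisfying 𝒢_{t+s}(Y) = 𝒢_t(Y) ∘ 𝒢_s(Y) for all t, s ∈ ℝ and 𝒢_0(Y) = id. Define Exp_∗ on functions f with f(∅) = 0 by (Exp_∗ f)(∅) = 1 and (Exp_∗ f)(Y) = ∑_{P partition of Y} ∏_{X ∈ P} f(X) for nonempty Y, and define Ln_∗ on functions F with F(∅) = 1 by (Ln_∗ F)(∅) = 0 and (Ln_∗ F)(Y) = ∑_{P partition of Y} (−1)^{|P|−1}(|P|−1)! ∏_{X ∈ P} F(X) for nonempty Y. For each t define the nonlinear map Φ_t on functions f with f(∅) = 0 by Φ_t(f)(Y) := Ln_∗( Y' ↦ 𝒢_t(Y')((Exp_∗ f)(Y')) )(Y). Then Φ_0 = id and Φ_{t_1} ∘ Φ_{t_2} = Φ_{t_2} ∘ Φ_{t_1} = Φ_{t_1 + t_2} for all t_1, t_2 ∈ ℝ. -/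
/-- The `∗`-exponential on functions from finite subsets of `α` to a commutative ring:
`(Exp_∗ f)(∅) = 1` and `(Exp_∗ f)(Y) = ∑_{P partition of Y} ∏_{X ∈ P} f(X)` for `Y ≠ ∅`
(the value `1` at `∅` arises from the unique (empty) partition of `∅`). -/
def expStar {α : Type*} [DecidableEq α] {A : Type*} [CommRing A]
    (f : Finset α → A) (Y : Finset α) : A :=
  ∑ P : Finpartition Y, ∏ X ∈ P.parts, f X

/-- The `∗`-logarithm on functions from finite subsets of `α` to a commutative ring:
`(Ln_∗ F)(∅) = 0` and
`(Ln_∗ F)(Y) = ∑_{P partition of Y} (−1)^{|P|−1}(|P|−1)! ∏_{X ∈ P} F(X)` for `Y ≠ ∅`. -/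
def lnStar {α : Type*} [DecidableEq α] {A : Type*} [CommRing A]
    (F : Finset α → A) (Y : Finset α) : A :=
  if Y = ∅ then 0
  else
    ∑ P : Finpartition Y,
      (-1 : A) ^ (P.parts.card - 1) * (Nat.factorial (P.parts.card - 1) : A) *
        ∏ X ∈ P.parts, F X

/-- The nonlinear cluster map `Φ_t(f) = Ln_∗ (Y' ↦ 𝒢_t(Y')((Exp_∗ f)(Y')))` (formula (21)
of the paper), obtained by conjugating the componentwise evolution `𝒢` by the
`∗`-exponential. -/
def clusterMap {α : Type*} [DecidableEq α] {A : Type*} [CommRing A]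
    (𝒢 : ℝ → Finset α → A → A) (t : ℝ) (f : Finset α → A) : Finset α → A :=
  lnStar (fun Y' => 𝒢 t Y' (expStar f Y'))

section Helpers
open Finset

variable {α : Type*} [DecidableEq α] {A : Type*} [CommRing A]

/-- Partitions with a distinguished block. -/
theorem sum_distinguished (g : Finset (Finset α) → Finset α → A) (Y : Finset α) :
    ∑ B ∈ Y.powerset.erase ∅, ∑ P : Finpartition (Y \ B), g P.parts B
      = ∑ Q : Finpartition Y, ∑ B ∈ Q.parts, g (Q.parts.erase B) B := by
  rw [Finset.sum_sigma', Finset.sum_sigma']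
  have key : ∀ (B : Finset α) (P : Finpartition (Y \ B)), B ≠ ∅ → B ∉ P.parts := by
    intro B P hB h
    have h1 := P.subset h
    obtain ⟨x, hx⟩ := Finset.nonempty_iff_ne_empty.mpr hB
    have := h1 hx
    simp [hx] at this
  refine Finset.sum_bij
    (fun x hx => ⟨Finpartition.extend x.2 (b := x.1) (c := Y)
      (by simp at hx; exact hx.1) sdiff_disjoint
      (by simp at hx; exact Finset.sdiff_union_of_subset hx.2), x.1⟩) ?_ ?_ ?_ ?_
  · intro x hx
    simp [Finpartition.extend]
  · rintro ⟨B, P⟩ hx ⟨B', P'⟩ hx' h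
    simp only [Sigma.mk.injEq, heq_eq_eq] at h
    obtain ⟨h1, rfl⟩ := h
    have hB : B ≠ ∅ := by simp at hx; exact hx.1
    have h2 := congrArg Finpartition.parts h1
    simp only [Finpartition.extend] at h2
    have h3 := congrArg (fun s => Finset.erase s B) h2
    simp only [Finset.erase_insert (key B P hB), Finset.erase_insert (key B P' hB)] at h3
    congr 1
    exact Finpartition.ext h3
  · rintro ⟨Q, B⟩ hx
    have hB : B ∈ Q.parts := by simpa using hx
    have hsup : (Q.parts.erase B).sup id = Y \ B := by
      ext x
      simp only [Finset.mem_sup, Finset.mem_erase, Finset.mem_sdiff, id]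
      constructor
      · rintro ⟨v, ⟨h1, h2⟩, h3⟩
        exact ⟨Q.subset h2 h3, fun h4 => h1 (Q.eq_of_mem_parts h2 hB h3 h4)⟩
      · rintro ⟨h1, h2⟩
        obtain ⟨t, ht, hxt⟩ := Q.exists_mem h1
        exact ⟨t, ⟨fun h => h2 (h ▸ hxt), ht⟩, hxt⟩
    refine ⟨⟨B, Q.ofSubset (Finset.erase_subset B Q.parts) hsup⟩, ?_, ?_⟩
    · simp
      exact ⟨Q.ne_empty hB, Q.subset hB⟩
    · simp only [Sigma.mk.injEq, heq_eq_eq, and_true]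
      apply Finpartition.ext
      simp [Finpartition.extend, Finpartition.ofSubset, Finset.insert_erase hB]
  · rintro ⟨B, P⟩ hx
    have hB : B ≠ ∅ := by simp at hx; exact hx.1
    simp [Finpartition.extend, Finset.erase_insert (key B P hB)]

theorem expStar_empty (f : Finset α → A) : expStar f ∅ = 1 := by
  unfold expStar
  have h : ∀ P : Finpartition (∅ : Finset α), P.parts = ∅ := fun P =>
    P.parts_eq_empty_iff.mpr rfl
  have : Unique (Finpartition (∅ : Finset α)) :=
    inferInstanceAs (Unique (Finpartition (⊥ : Finset α)))
  rw [Finset.sum_congr rfl (fun P _ => by rw [h P, Finset.prod_empty])]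
  have hc : Fintype.card (Finpartition (∅ : Finset α)) = 1 :=
    Fintype.card_eq_one_iff_nonempty_unique.mpr ⟨this⟩
  simp [Finset.card_univ, hc]

theorem filter_parts_mem {Y : Finset α} (Q : Finpartition Y) {a : α} (ha : a ∈ Y) :
    Q.parts.filter (fun B => a ∈ B) = {Q.part a} := by
  ext B
  simp only [Finset.mem_filter, Finset.mem_singleton]
  constructor
  · rintro ⟨h1, h2⟩
    exact (Q.part_eq_of_mem h1 h2).symm
  · rintro rfl
    exact ⟨Q.part_mem.mpr ha, Q.mem_part_self.mpr ha⟩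

theorem expStar_rec (f : Finset α → A) {Y : Finset α} {a : α} (ha : a ∈ Y) :
    expStar f Y = ∑ B ∈ Y.powerset.filter (fun B => a ∈ B), f B * expStar f (Y \ B) := by
  have h := sum_distinguished
    (fun p B => if a ∈ B then f B * ∏ X ∈ p, f X else 0) Y
  have hr : ∀ Q : Finpartition Y, (∑ B ∈ Q.parts,
      if a ∈ B then f B * ∏ X ∈ Q.parts.erase B, f X else 0) = ∏ X ∈ Q.parts, f X := by
    intro Q
    rw [← Finset.sum_filter, filter_parts_mem Q ha, Finset.sum_singleton,
      Finset.mul_prod_erase _ _ (Q.part_mem.mpr ha)]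
  simp only [hr] at h
  rw [expStar, ← h]
  rw [Finset.sum_filter]
  have he := Finset.sum_erase Y.powerset (a := ∅)
    (f := fun B => if a ∈ B then f B * expStar f (Y \ B) else 0) (by simp)
  rw [← he]
  refine Finset.sum_congr rfl fun B _ => ?_
  split_ifs
  · rw [expStar, Finset.mul_sum]
  · simp

theorem coeff_cancel (n : ℕ) (hn : 2 ≤ n) :
    (-1 : A) ^ (n - 1) * (Nat.factorial (n - 1) : A)
      + ((n - 1 : ℕ) : A) * ((-1 : A) ^ (n - 1 - 1) * (Nat.factorial (n - 1 - 1) : A)) = 0 := by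
  obtain ⟨k, rfl⟩ := Nat.exists_eq_add_of_le' hn
  simp only [show k + 2 - 1 = k + 1 by omega, Nat.add_sub_cancel, Nat.factorial_succ, pow_succ]
  push_cast
  ring

theorem lnStar_rec (F : Finset α → A) {Y : Finset α} {a : α} (ha : a ∈ Y) :
    lnStar F Y + ∑ B ∈ (Y.powerset.erase ∅).filter (fun B => a ∉ B), lnStar F (Y \ B) * F B
      = F Y := by
  have hY : Y ≠ ∅ := Finset.ne_empty_of_mem ha
  set c : ℕ → A := fun n => (-1 : A) ^ (n - 1) * (Nat.factorial (n - 1) : A) with hc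
  have h := sum_distinguished
    (fun p B => if a ∉ B then (c p.card * ∏ X ∈ p, F X) * F B else 0) Y
  have hr : ∀ Q : Finpartition Y, (∑ B ∈ Q.parts,
      if a ∉ B then (c (Q.parts.erase B).card * ∏ X ∈ Q.parts.erase B, F X) * F B else 0)
        = ((Q.parts.card - 1 : ℕ) : A) * c (Q.parts.card - 1) * ∏ X ∈ Q.parts, F X := by
    intro Q
    rw [← Finset.sum_filter]
    have hcard : (Q.parts.filter (fun B => a ∉ B)).card = Q.parts.card - 1 := by
      have h1 := Finset.card_filter_add_card_filter_not (s := Q.parts) (fun B => a ∈ B)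
      rw [filter_parts_mem Q ha, Finset.card_singleton] at h1
      omega
    rw [Finset.sum_congr rfl (g := fun _ => c (Q.parts.card - 1) * ∏ X ∈ Q.parts, F X)]
    · rw [Finset.sum_const, hcard, nsmul_eq_mul, ← mul_assoc]
    · intro B hB
      have hB' := (Finset.mem_filter.mp hB).1
      rw [Finset.card_erase_of_mem hB', mul_assoc, Finset.prod_erase_mul _ _ hB']
  simp only [hr] at h
  have hl : ∑ B ∈ (Y.powerset.erase ∅).filter (fun B => a ∉ B), lnStar F (Y \ B) * F B
      = ∑ Q : Finpartition Y,
        ((Q.parts.card - 1 : ℕ) : A) * c (Q.parts.card - 1) * ∏ X ∈ Q.parts, F X := by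
    rw [← h, Finset.sum_filter]
    refine Finset.sum_congr rfl fun B _ => ?_
    by_cases hB : a ∉ B
    · simp only [if_pos hB]
      have : Y \ B ≠ ∅ := Finset.ne_empty_of_mem (Finset.mem_sdiff.mpr ⟨ha, hB⟩)
      rw [lnStar, if_neg this, Finset.sum_mul]
    · simp only [if_neg hB, Finset.sum_const_zero]
  rw [hl, lnStar, if_neg hY, ← Finset.sum_add_distrib]
  rw [Finset.sum_eq_single (Finpartition.indiscrete (a := Y) hY)]
  · simp [Finpartition.indiscrete]
  · intro Q _ hQ
    have h2 : 2 ≤ Q.parts.card := by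
      by_contra hlt
      have hpos : 0 < Q.parts.card := Finset.card_pos.mpr (Q.parts_nonempty hY)
      obtain ⟨X, hX⟩ := Finset.card_eq_one.mp (by omega : Q.parts.card = 1)
      apply hQ
      apply Finpartition.ext
      have := Q.sup_parts
      rw [hX] at this ⊢
      simp at this
      simp [Finpartition.indiscrete, this]
    rw [← add_mul]
    have := coeff_cancel (A := A) _ h2
    simp only [hc]
    rw [this, zero_mul]
  · simp

theorem expStar_lnStar (F : Finset α → A) (Y : Finset α) (hY : Y ≠ ∅) :
    expStar (lnStar F) Y = F Y := by
  induction Y using Finset.strongInduction with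
  | H Y ih =>
  obtain ⟨a, ha⟩ := Finset.nonempty_iff_ne_empty.mpr hY
  rw [expStar_rec _ ha, ← lnStar_rec F ha]
  rw [← Finset.add_sum_erase _ _ (a := Y) (by simp [ha])]
  rw [Finset.sdiff_self, expStar_empty, mul_one]
  congr 1
  refine Finset.sum_bij' (fun B _ => Y \ B) (fun B _ => Y \ B) ?_ ?_ ?_ ?_ ?_
  · intro B hB
    simp only [Finset.mem_erase, Finset.mem_filter, Finset.mem_powerset] at hB ⊢
    refine ⟨⟨fun h => hB.1 ?_, Finset.sdiff_subset⟩, by simp [hB.2.2]⟩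
    exact Finset.Subset.antisymm hB.2.1 (Finset.sdiff_eq_empty_iff_subset.mp h)
  · intro B hB
    simp only [Finset.mem_erase, Finset.mem_filter, Finset.mem_powerset] at hB ⊢
    refine ⟨fun h => hB.1.1 ?_, Finset.sdiff_subset, by simp [ha, hB.2]⟩
    rw [← Finset.sdiff_sdiff_eq_self hB.1.2, h, Finset.sdiff_self]
  · intro B hB
    simp only [Finset.mem_erase, Finset.mem_filter, Finset.mem_powerset] at hB
    exact Finset.sdiff_sdiff_eq_self hB.2.1
  · intro B hB
    simp only [Finset.mem_erase, Finset.mem_filter, Finset.mem_powerset] at hB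
    exact Finset.sdiff_sdiff_eq_self hB.1.2
  · intro B hB
    simp only [Finset.mem_erase, Finset.mem_filter, Finset.mem_powerset] at hB
    rw [Finset.sdiff_sdiff_eq_self hB.2.1, ih (Y \ B)]
    · exact Finset.sdiff_ssubset hB.2.1 ⟨a, hB.2.2⟩
    · intro h
      exact hB.1 (Finset.Subset.antisymm hB.2.1 (Finset.sdiff_eq_empty_iff_subset.mp h))

theorem expStar_injective (f g : Finset α → A) (h0 : f ∅ = g ∅)
    (h : ∀ Y, expStar f Y = expStar g Y) (Y : Finset α) : f Y = g Y := by
  induction Y using Finset.strongInduction with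
  | H Y ih =>
  rcases Finset.eq_empty_or_nonempty Y with rfl | ⟨a, ha⟩
  · exact h0
  have hY := h Y
  rw [expStar_rec f ha, expStar_rec g ha,
    ← Finset.add_sum_erase _ _ (a := Y) (by simp [ha]),
    ← Finset.add_sum_erase _ (fun B => g B * expStar g (Y \ B)) (a := Y) (by simp [ha]),
    Finset.sdiff_self, expStar_empty, expStar_empty, mul_one, mul_one] at hY
  rw [Finset.sum_congr rfl (g := fun B => g B * expStar g (Y \ B))] at hY
  · exact add_right_cancel hY
  · intro B hB
    simp only [Finset.mem_erase, Finset.mem_filter, Finset.mem_powerset] at hB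
    rw [h, ih B (Finset.ssubset_iff_subset_ne.mpr ⟨hB.2.1, hB.1⟩)]

theorem lnStar_expStar (f : Finset α → A) (h0 : f ∅ = 0) : lnStar (expStar f) = f := by
  funext Y
  refine expStar_injective _ _ (by simp [lnStar, h0]) (fun Z => ?_) Y
  by_cases hZ : Z = ∅
  · rw [hZ, expStar_empty, expStar_empty]
  · exact expStar_lnStar _ _ hZ

theorem lnStar_congr (F G : Finset α → A) (h : ∀ Y, Y ≠ ∅ → F Y = G Y) :
    lnStar F = lnStar G := by
  funext Y
  unfold lnStar
  split_ifs with hY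
  · rfl
  · refine Finset.sum_congr rfl fun P _ => ?_
    rw [Finset.prod_congr rfl fun X hX => h X (P.ne_empty hX)]

theorem clusterMap_comp (𝒢 : ℝ → Finset α → A → A)
    (hgroup : ∀ (t s : ℝ) (Y : Finset α), 𝒢 (t + s) Y = 𝒢 t Y ∘ 𝒢 s Y)
    (t s : ℝ) (f : Finset α → A) :
    clusterMap 𝒢 t (clusterMap 𝒢 s f) = clusterMap 𝒢 (t + s) f := by
  unfold clusterMap
  refine lnStar_congr _ _ fun Y hY => ?_
  rw [expStar_lnStar _ _ hY, hgroup]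
  rfl

end Helpers

/-- **Structural core of Theorem 2 of the paper.** If the maps `𝒢_t(Y) : A → A` form a
one-parameter group componentwise (`𝒢_{t+s}(Y) = 𝒢_t(Y) ∘ 𝒢_s(Y)`, `𝒢_0(Y) = id`), then
the nonlinear cluster maps `Φ_t` form a one-parameter group on functions `f` with
`f(∅) = 0`: `Φ_0 = id` and `Φ_{t₁} ∘ Φ_{t₂} = Φ_{t₂} ∘ Φ_{t₁} = Φ_{t₁+t₂}`. -/
theorem clusterMap_group {α : Type*} [DecidableEq α] {A : Type*} [CommRing A]
    (𝒢 : ℝ → Finset α → A → A)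
    (hgroup : ∀ (t s : ℝ) (Y : Finset α), 𝒢 (t + s) Y = 𝒢 t Y ∘ 𝒢 s Y)
    (hid : ∀ Y : Finset α, 𝒢 0 Y = id) :
    (∀ f : Finset α → A, f ∅ = 0 → clusterMap 𝒢 0 f = f) ∧
      (∀ (t₁ t₂ : ℝ) (f : Finset α → A), f ∅ = 0 →
        clusterMap 𝒢 t₁ (clusterMap 𝒢 t₂ f) = clusterMap 𝒢 (t₁ + t₂) f ∧
          clusterMap 𝒢 t₂ (clusterMap 𝒢 t₁ f) = clusterMap 𝒢 (t₁ + t₂) f) := by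
  refine ⟨fun f hf => ?_, fun t₁ t₂ f _ => ⟨clusterMap_comp 𝒢 hgroup t₁ t₂ f, ?_⟩⟩
  · simp only [clusterMap, hid, id]
    exact lnStar_expStar f hf
  · rw [add_comm]
    exact clusterMap_comp 𝒢 hgroup t₂ t₁ f
end
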